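/- For every integer K > 1 there exists an ergodic C^{K-1} diffeomorphism T of the torus 𝕋² preserving the Haar–Lebesgue probability measure λ such that T is measure-theoretically isomorphic to the rotation of the circle by some irrational number and the upper topological slow entropy of T with respect to the polynomial scaling family a^{pol}_m(t) = m^t satisfies 1/K⁴ ≤ ent̄^top_{a^{pol}}(T) < 1/(K⁴−K−2). -/

import Mathlib

open MeasureTheory Filter Set
open scoped Topology ENNReal NNReal

noncomputable section

/-- The Bowen metric `d_n^T(x,y) = max_{0 ≤ i ≤ n-1} d(T^i x, T^i y)`. -/
def bowenDist {X : Type*} [PseudoMetricSpace X] (T : X → X) (n : ℕ) (x y : X) : ℝ :=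
  (((Finset.range n).sup fun i => nndist (T^[i] x) (T^[i] y)) : ℝ≥0)

/-- `N_{d_n^T}(ε)`: the minimal number of `(ε,n)`-Bowen balls of `T` needed to cover the
whole space. -/
def bowenCoverNum {X : Type*} [PseudoMetricSpace X] (T : X → X) (n : ℕ) (ε : ℝ) : ℕ :=
  sInf {N : ℕ | ∃ F : Finset X, F.card = N ∧ ∀ y : X, ∃ x ∈ F, bowenDist T n x y < ε}

/-- `N(ε)`: the supremum (`0` if the set is empty, by the `Real.sSup` convention) of all
`t > 0` such that `limsup_n N_{d_n^T}(ε) / a_n(t) > 0`. -/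
def topSlowEntFun {X : Type*} [PseudoMetricSpace X] (T : X → X) (a : ℕ → ℝ → ℝ) (ε : ℝ) : ℝ :=
  sSup {t : ℝ | 0 < t ∧
    0 < Filter.atTop.limsup fun n => (bowenCoverNum T n ε : ℝ≥0∞) / ENNReal.ofReal (a n t)}

/-- The upper topological slow entropy of `T` with respect to the scaling family `a`
equals `E`, i.e. `N(ε) → E` as `ε → 0⁺`. -/
def HasUpperTopSlowEntropy {X : Type*} [PseudoMetricSpace X] (T : X → X)
    (a : ℕ → ℝ → ℝ) (E : ℝ) : Prop :=
  Filter.Tendsto (topSlowEntFun T a) (𝓝[>] (0 : ℝ)) (𝓝 E)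

/-- The circle `𝕋¹ = ℝ/ℤ` with its quotient metric and Haar–Lebesgue probability
measure `volume`. -/
abbrev Torus1 : Type := AddCircle (1 : ℝ)

/-- The 2-torus `𝕋² = ℝ²/ℤ²`, with its quotient (flat) metric, its Borel σ-algebra and
its Haar–Lebesgue probability measure `volume`. -/
abbrev Torus2 : Type := AddCircle (1 : ℝ) × AddCircle (1 : ℝ)

/-- Canonical projection `ℝ² → 𝕋²`. -/
def torusProj : ℝ × ℝ → Torus2 := fun p => ((p.1 : Torus1), (p.2 : Torus1))

/-- `F : ℝ² → ℝ²` is a lift of `T : 𝕋² → 𝕋²`. -/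
def IsLiftOf (F : ℝ × ℝ → ℝ × ℝ) (T : Torus2 → Torus2) : Prop :=
  ∀ p, torusProj (F p) = T (torusProj p)

/-- `T` is a `C^k` diffeomorphism of the torus: it is a bijection and both `T` and `T⁻¹`
admit `C^k` lifts to the universal cover `ℝ²`. -/
def IsCkTorusDiffeo (k : ℕ∞) (T : Torus2 → Torus2) : Prop :=
  Function.Bijective T ∧
  (∃ F : ℝ × ℝ → ℝ × ℝ, ContDiff ℝ k F ∧ IsLiftOf F T) ∧
  (∃ G : ℝ × ℝ → ℝ × ℝ, ContDiff ℝ k G ∧ IsLiftOf G (Function.invFun T))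

/-- `T` is weakly mixing w.r.t. the measure `μ`: `T × T` is ergodic for `μ × μ`. -/
def WeaklyMixing {X : Type*} [MeasurableSpace X] (T : X → X) (μ : Measure X) : Prop :=
  Ergodic (fun p : X × X => (T p.1, T p.2)) (μ.prod μ)

/-- `T` is uniquely ergodic with the Haar–Lebesgue measure `volume` as its unique
invariant Borel probability measure. -/
def UniquelyErgodicWithVolume (T : Torus2 → Torus2) : Prop :=
  MeasurePreserving T volume volume ∧
  ∀ μ : Measure Torus2, IsProbabilityMeasure μ → MeasurePreserving T μ μ → μ = volume

/-- `T` (preserving the Haar measure `volume` on `𝕋²`) is measure-theoretically isomorphic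
to the rotation of the circle `𝕋¹ = ℝ/ℤ` by some irrational number `α`. -/
def IsoToIrrationalRotation (T : Torus2 → Torus2) : Prop :=
  ∃ α : ℝ, Irrational α ∧
    ∃ (A : Set Torus2) (B : Set Torus1) (ψ : Torus2 → Torus1) (φ : Torus1 → Torus2),
      MeasurableSet A ∧ MeasurableSet B ∧
      volume Aᶜ = 0 ∧ volume Bᶜ = 0 ∧
      Set.MapsTo T A A ∧ Set.MapsTo (fun y : Torus1 => y + (α : Torus1)) B B ∧
      Measurable ψ ∧ Measurable φ ∧
      Set.MapsTo ψ A B ∧ Set.MapsTo φ B A ∧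
      (∀ x ∈ A, φ (ψ x) = x) ∧ (∀ y ∈ B, ψ (φ y) = y) ∧
      Measure.map ψ volume = volume ∧
      (∀ x ∈ A, ψ (T x) = ψ x + (α : Torus1))

/-- A finite measurable partition of `X`. -/
structure FinMeasPartition (X : Type*) [MeasurableSpace X] where
  card : ℕ
  piece : Fin card → Set X
  measurable : ∀ i, MeasurableSet (piece i)
  disjoint : Pairwise fun i j => Disjoint (piece i) (piece j)
  cover : (⋃ i, piece i) = Set.univ

open Classical in
/-- The normalized Hamming distance between the length-`n` `P`-codings of the `T`-orbits
of `x` and `y` (the codings differ at time `k` iff `T^k x` and `T^k y` lie in different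
pieces of `P`). -/
def codeHammingDist {X : Type*} [MeasurableSpace X] (T : X → X) (P : FinMeasPartition X)
    (n : ℕ) (x y : X) : ℝ :=
  (((Finset.range n).filter fun k =>
      ¬ ∃ i, T^[k] x ∈ P.piece i ∧ T^[k] y ∈ P.piece i).card : ℝ) / n

/-- `S^H_P(T,n,ε)`: the minimal number of `(ε,n)`-Hamming balls whose union has
`μ`-measure greater than `1 - ε`. -/
def hammingCoverNum {X : Type*} [MeasurableSpace X] (μ : Measure X) (T : X → X)
    (P : FinMeasPartition X) (n : ℕ) (ε : ℝ) : ℕ :=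
  sInf {N : ℕ | ∃ F : Finset X, F.card = N ∧
    ENNReal.ofReal (1 - ε) < μ (⋃ x ∈ F, {y | codeHammingDist T P n x y < ε})}

/-- For a fixed partition `P` and `ε > 0`: the supremum (with the `Real.sSup` convention,
`0` if the set is empty) of all `t > 0` with `limsup_n S^H_P(T,n,ε)/a_n(t) > 0`. -/
def measSlowEntFun {X : Type*} [MeasurableSpace X] (μ : Measure X) (T : X → X)
    (a : ℕ → ℝ → ℝ) (P : FinMeasPartition X) (ε : ℝ) : ℝ :=
  sSup {t : ℝ | 0 < t ∧
    0 < Filter.atTop.limsup fun n =>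
      (hammingCoverNum μ T P n ε : ℝ≥0∞) / ENNReal.ofReal (a n t)}

/-- The upper measure-theoretic slow entropy of `(T,μ)` w.r.t. the scaling family `a`
equals `E`: for every finite measurable partition the limit as `ε → 0⁺` exists, and the
least upper bound over all partitions of these limits is `E`. -/
def HasUpperMeasSlowEntropy {X : Type*} [MeasurableSpace X] (μ : Measure X) (T : X → X)
    (a : ℕ → ℝ → ℝ) (E : ℝ) : Prop :=
  (∀ P : FinMeasPartition X, ∃ e : ℝ,
      Filter.Tendsto (measSlowEntFun μ T a P) (𝓝[>] (0 : ℝ)) (𝓝 e)) ∧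
  IsLUB {e : ℝ | ∃ P : FinMeasPartition X,
      Filter.Tendsto (measSlowEntFun μ T a P) (𝓝[>] (0 : ℝ)) (𝓝 e)} E

/-- `Γ_r(x) = (Γ(x^{1/r} + 1))^r`, where `Γ` is the Euler Gamma function. -/
def GammaR (r : ℕ) (x : ℝ) : ℝ := (Real.Gamma (x ^ ((r : ℝ)⁻¹) + 1)) ^ r

/-- The inverse of `Γ_r` on `[1,∞)` (where `Γ_r` is strictly increasing with `Γ_r 1 = 1`). -/
def GammaRInv (r : ℕ) (y : ℝ) : ℝ := sSup {x : ℝ | 1 ≤ x ∧ GammaR r x ≤ y}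

/-- The intermediate scaling family `a^{int1,r}_m(t) = m^(t / Γ_r⁻¹(ln m / ln q₁))`. -/
def intScale1 (r q₁ : ℕ) (m : ℕ) (t : ℝ) : ℝ :=
  (m : ℝ) ^ (t / GammaRInv r (Real.log m / Real.log q₁))

/-- The intermediate scaling family
`a^{int2,r}_m(t) = m^(t / (Γ_r⁻¹(ln m / ln q₁))^((r-2)/r))`. -/
def intScale2 (r q₁ : ℕ) (m : ℕ) (t : ℝ) : ℝ :=
  (m : ℝ) ^ (t / GammaRInv r (Real.log m / Real.log q₁) ^ (((r : ℝ) - 2) / (r : ℝ)))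

/-- The logarithmic scaling family `a^{ln}_m(t) = (ln m)^t`. -/
def logScale (m : ℕ) (t : ℝ) : ℝ := Real.log m ^ t

/-- The polynomial scaling family `a^{pol}_m(t) = m^t`. -/
def polScale (m : ℕ) (t : ℝ) : ℝ := (m : ℝ) ^ t

end

/-!
The diffeomorphism is a `C^∞` limit of the Anosov–Katok type: it is the limit of conjugates
`h_n ∘ R_{α_n} ∘ h_n⁻¹`, where `R_α` translates the first coordinate by `α` and `α_n ∈ ℤ / q_n`.
Each stage changes the chart `h_n` twice. First, a twist commuting with `R_{α_n}` makes the first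
coordinate in the chart nearly determine the point, so that these first coordinates converge to an
almost everywhere injective factor map onto an irrational rotation. Second comes a sine shear of
frequency `M` and amplitude about `N^a`, while the angle increases by `1 / (M N)`, so that
`q_{n+1} = M N`.

The shear creates about `N^a` orbits separated within time `q_{n+1}`, which is more than
`q_{n+1}^c` for `c < a`, and at no time are there more than a constant times `N^a`. The maps before
and after the stage drift apart at speed at most about `N^(a-1)`, so the bound of the preceding
stages remains valid for the limit up to time about `N^(1-a)`; by then `N^a` orbits are fewer than
`m^d` as soon as `d > a / (1 - a)`. Hence the slow entropy lies between `c` and `d` whenever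
`c < d / (1 + d)`; the theorem takes `c = 1 / K^4` and `d = 1 / (K^4 - 2)`.
-/

/-! ### Bowen covers and slow entropy -/

section BowenCover

variable {X : Type*} [PseudoMetricSpace X] {T T' : X → X} {n : ℕ} {ε ε' δ : ℝ}

lemma bowenDist_lt_iff (hε : 0 < ε) {x y : X} :
    bowenDist T n x y < ε ↔ ∀ i < n, dist (T^[i] x) (T^[i] y) < ε := by
  lift ε to ℝ≥0 using hε.le
  rw [bowenDist, NNReal.coe_lt_coe, Finset.sup_lt_iff (NNReal.coe_pos.1 hε)]
  simp only [Finset.mem_range, ← NNReal.coe_lt_coe, coe_nndist]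

lemma bowenCoverNum_le_card {F : Finset X} (hF : ∀ y, ∃ x ∈ F, bowenDist T n x y < ε) :
    bowenCoverNum T n ε ≤ F.card :=
  Nat.sInf_le ⟨F, rfl, hF⟩

variable [CompactSpace X]

lemma exists_card_eq_bowenCoverNum (hT : Continuous T) (n : ℕ) (hε : 0 < ε) :
    ∃ F : Finset X, F.card = bowenCoverNum T n ε ∧ ∀ y, ∃ x ∈ F, bowenDist T n x y < ε := by
  suffices h : {N | ∃ F : Finset X, F.card = N ∧ ∀ y, ∃ x ∈ F, bowenDist T n x y < ε}.Nonempty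
    from Nat.sInf_mem h
  have hopen : ∀ x : X, IsOpen {y | bowenDist T n x y < ε} := fun x => by
    simp only [bowenDist_lt_iff hε, Set.ofPred_forall]
    exact (finite_lt_nat n).isOpen_biInter fun i _ =>
      isOpen_lt (continuous_const.dist (hT.iterate i)) continuous_const
  obtain ⟨F, hF⟩ := isCompact_univ.elim_finite_subcover _ hopen fun x _ => mem_iUnion.2
    ⟨x, (bowenDist_lt_iff hε).2 fun i _ => by simpa only [dist_self] using hε⟩
  refine ⟨_, F, rfl, fun y => ?_⟩
  obtain ⟨x, hxF, hx⟩ := mem_iUnion₂.1 (hF (mem_univ y))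
  exact ⟨x, hxF, hx⟩

lemma bowenCoverNum_add_le (hT : Continuous T) (hε : 0 < ε) (hδ : 0 ≤ δ)
    (hclose : ∀ i < n, ∀ x, dist (T^[i] x) (T'^[i] x) ≤ δ) :
    bowenCoverNum T' n (ε + 2 * δ) ≤ bowenCoverNum T n ε := by
  obtain ⟨F, hcard, hF⟩ := exists_card_eq_bowenCoverNum hT n hε
  rw [← hcard]
  refine bowenCoverNum_le_card fun y => ?_
  obtain ⟨x, hxF, hx⟩ := hF y
  refine ⟨x, hxF, (bowenDist_lt_iff (by positivity)).2 fun i hi => ?_⟩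
  have hxi := hclose i hi x
  rw [dist_comm] at hxi
  linarith [(bowenDist_lt_iff hε).1 hx i hi, hclose i hi y,
    dist_triangle4 (T'^[i] x) (T^[i] x) (T^[i] y) (T'^[i] y)]

lemma bowenCoverNum_anti (hT : Continuous T) (n : ℕ) (hε : 0 < ε) (h : ε ≤ ε') :
    bowenCoverNum T n ε' ≤ bowenCoverNum T n ε := by
  obtain ⟨F, hcard, hF⟩ := exists_card_eq_bowenCoverNum hT n hε
  rw [← hcard]
  exact bowenCoverNum_le_card fun y => (hF y).imp fun x hx => ⟨hx.1, hx.2.trans_le h⟩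

lemma card_le_bowenCoverNum {ι : Type*} [Fintype ι] (hT : Continuous T) (hε : 0 < ε)
    {x : ι → X} (hsep : Pairwise fun i j => ∃ k < n, 2 * ε ≤ dist (T^[k] (x i)) (T^[k] (x j))) :
    Fintype.card ι ≤ bowenCoverNum T n ε := by
  obtain ⟨F, hcard, hF⟩ := exists_card_eq_bowenCoverNum hT n hε
  choose c hcF hc using fun i => hF (x i)
  rw [← hcard]
  refine Finset.card_le_card_of_injOn c (fun i _ => hcF i) fun i _ j _ hij => ?_
  by_contra hne
  obtain ⟨k, hk, hd⟩ := hsep hne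
  have hi := (bowenDist_lt_iff hε).1 (hc i) k hk
  have hj := (bowenDist_lt_iff hε).1 (hc j) k hk
  rw [← hij] at hj
  linarith [dist_triangle_left (T^[k] (x i)) (T^[k] (x j)) (T^[k] (c i))]

end BowenCover

/-- The set of exponents whose supremum is `topSlowEntFun T a ε`. -/
def slowEntropyExponents {X : Type*} [PseudoMetricSpace X] (T : X → X) (a : ℕ → ℝ → ℝ) (ε : ℝ) :
    Set ℝ :=
  {t | 0 < t ∧ 0 < atTop.limsup fun n => (bowenCoverNum T n ε : ℝ≥0∞) / ENNReal.ofReal (a n t)}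

section SlowEntropy

variable {X : Type*} [PseudoMetricSpace X] {T : X → X} {ε c d : ℝ}

lemma mem_slowEntropyExponents_polScale (hc : 0 < c)
    (h : ∃ᶠ m : ℕ in atTop, (m : ℝ) ^ c ≤ bowenCoverNum T m ε) :
    c ∈ slowEntropyExponents T polScale ε := by
  refine ⟨hc, one_pos.trans_le (le_limsup_of_frequently_le ?_)⟩
  refine (h.and_eventually (eventually_gt_atTop 0)).mono fun m ⟨hm, hpos⟩ => ?_
  have hscale : 0 < polScale m c := Real.rpow_pos_of_pos (Nat.cast_pos.2 hpos) c
  rw [ENNReal.le_div_iff_mul_le (Or.inl (ENNReal.ofReal_pos.2 hscale).ne')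
    (Or.inl ENNReal.ofReal_ne_top), one_mul, ← ENNReal.ofReal_natCast]
  exact ENNReal.ofReal_le_ofReal hm

lemma le_of_mem_slowEntropyExponents_polScale
    (h : Tendsto (fun m : ℕ => bowenCoverNum T m ε / (m : ℝ) ^ d) atTop (𝓝 0)) {t : ℝ}
    (ht : t ∈ slowEntropyExponents T polScale ε) : t ≤ d := by
  by_contra! hdt
  refine ht.2.ne' (Tendsto.limsup_eq ?_)
  have hlim := ENNReal.tendsto_ofReal h
  rw [ENNReal.ofReal_zero] at hlim
  refine tendsto_of_tendsto_of_tendsto_of_le_of_le' tendsto_const_nhds hlim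
    (Eventually.of_forall fun _ => zero_le) ?_
  filter_upwards [eventually_ge_atTop 1] with m hm
  have hm' : (1 : ℝ) ≤ m := Nat.one_le_cast.2 hm
  rw [ENNReal.ofReal_div_of_pos (by positivity), ENNReal.ofReal_natCast]
  exact ENNReal.div_le_div_left
    (ENNReal.ofReal_le_ofReal (Real.rpow_le_rpow_of_exponent_le hm' hdt.le)) _

variable [CompactSpace X] {a : ℕ → ℝ → ℝ}

lemma slowEntropyExponents_anti (hT : Continuous T) {ε' : ℝ} (hε : 0 < ε) (h : ε ≤ ε') :
    slowEntropyExponents T a ε' ⊆ slowEntropyExponents T a ε := fun _ ht =>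
  ⟨ht.1, ht.2.trans_le <| limsup_le_limsup <| Eventually.of_forall fun m =>
    ENNReal.div_le_div_right (Nat.cast_le.2 (bowenCoverNum_anti hT m hε h)) _⟩

theorem exists_tendsto_topSlowEntFun (hT : Continuous T)
    (hc : ∀ᶠ ε in 𝓝[>] (0 : ℝ), c ∈ slowEntropyExponents T a ε)
    (hd : ∀ᶠ ε in 𝓝[>] (0 : ℝ), d ∈ upperBounds (slowEntropyExponents T a ε)) :
    ∃ E, Tendsto (topSlowEntFun T a) (𝓝[>] 0) (𝓝 E) ∧ c ≤ E ∧ E ≤ d := by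
  obtain ⟨δ, hδ, hsub⟩ := mem_nhdsGT_iff_exists_Ioo_subset.1 (hc.and hd)
  have hanti : AntitoneOn (topSlowEntFun T a) (Ioo 0 δ) := fun ε hε ε' hε' h =>
    csSup_le_csSup ⟨d, (hsub hε).2⟩ ⟨c, (hsub hε').1⟩ (slowEntropyExponents_anti hT hε.1 h)
  have hlower : ∀ᶠ ε in 𝓝[>] (0 : ℝ), c ≤ topSlowEntFun T a ε :=
    (hc.and hd).mono fun ε h => le_csSup ⟨d, h.2⟩ h.1
  have hupper : ∀ᶠ ε in 𝓝[>] (0 : ℝ), topSlowEntFun T a ε ≤ d :=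
    (hc.and hd).mono fun ε h => csSup_le ⟨c, h.1⟩ h.2
  have hbdd : BddAbove (topSlowEntFun T a '' Ioo 0 δ) :=
    ⟨d, forall_mem_image.2 fun ε hε => csSup_le ⟨c, (hsub hε).1⟩ (hsub hε).2⟩
  have hlim := hanti.dual_right.tendsto_nhdsWithin_Ioo_right (nonempty_Ioo.2 hδ) hbdd.dual
  exact ⟨_, hlim, ge_of_tendsto hlim hlower, le_of_tendsto hlim hupper⟩

end SlowEntropy

/-! ### Lifts of torus maps -/

/-- `F : ℝ² → ℝ²` commutes with the translations by `ℤ²`; such maps are the lifts of the torus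
maps homotopic to the identity. -/
def IsIntEquivariant (F : ℝ × ℝ → ℝ × ℝ) : Prop :=
  ∀ (p : ℝ × ℝ) (a b : ℤ), F (p + ((a : ℝ), (b : ℝ))) = F p + ((a : ℝ), (b : ℝ))

lemma addCircle_coe_eq_iff {x y : ℝ} : (x : Torus1) = y ↔ ∃ a : ℤ, y = x + a := by
  rw [eq_comm, ← sub_eq_zero, ← AddCircle.coe_sub, AddCircle.coe_eq_zero_iff]
  simp only [zsmul_eq_mul, mul_one, eq_comm (b := y - x), sub_eq_iff_eq_add']

lemma torusProj_eq_iff {p q : ℝ × ℝ} :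
    torusProj p = torusProj q ↔ ∃ a b : ℤ, q = p + ((a : ℝ), (b : ℝ)) := by
  simp only [torusProj, addCircle_coe_eq_iff, Prod.ext_iff, Prod.fst_add,
    Prod.snd_add, exists_and_left, exists_and_right]

lemma torusProj_add_int (p : ℝ × ℝ) (a b : ℤ) :
    torusProj (p + ((a : ℝ), (b : ℝ))) = torusProj p :=
  (torusProj_eq_iff.2 ⟨a, b, rfl⟩).symm

lemma isOpenQuotientMap_torusProj : IsOpenQuotientMap torusProj :=
  QuotientAddGroup.isOpenQuotientMap_mk.prodMap QuotientAddGroup.isOpenQuotientMap_mk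

lemma exists_unitSquare_add_int (p : ℝ × ℝ) :
    ∃ q ∈ Icc (0 : ℝ × ℝ) 1, ∃ a b : ℤ, p = q + ((a : ℝ), (b : ℝ)) :=
  ⟨(Int.fract p.1, Int.fract p.2), ⟨⟨Int.fract_nonneg _, Int.fract_nonneg _⟩,
    ⟨(Int.fract_lt_one _).le, (Int.fract_lt_one _).le⟩⟩, ⌊p.1⌋, ⌊p.2⌋,
    Prod.ext (Int.fract_add_floor _).symm (Int.fract_add_floor _).symm⟩

lemma dist_addCircle_coe_le (x y : ℝ) : dist (x : Torus1) y ≤ |x - y| := by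
  rw [dist_eq_norm, ← AddCircle.coe_sub]
  exact QuotientAddGroup.norm_mk_le_norm

lemma lipschitzWith_torusProj : LipschitzWith 1 torusProj := by
  refine LipschitzWith.of_dist_le_mul fun p q => ?_
  rw [NNReal.coe_one, one_mul]
  exact max_le_max (dist_addCircle_coe_le _ _) (dist_addCircle_coe_le _ _)

lemma dist_torusProj_le (p q : ℝ × ℝ) : dist (torusProj p) (torusProj q) ≤ dist p q := by
  simpa using lipschitzWith_torusProj.dist_le_mul p q

lemma exists_int_dist_eq (p q : ℝ × ℝ) :
    ∃ a b : ℤ, dist p (q + ((a : ℝ), (b : ℝ))) = dist (torusProj p) (torusProj q) := by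
  have hcircle : ∀ x y : ℝ, ∃ a : ℤ, dist x (y + a) = dist (x : Torus1) y := fun x y =>
    ⟨round (x - y), by
      rw [dist_eq_norm, dist_eq_norm, ← AddCircle.coe_sub, UnitAddCircle.norm_eq, ← sub_sub,
        Real.norm_eq_abs]⟩
  obtain ⟨a, ha⟩ := hcircle p.1 q.1
  obtain ⟨b, hb⟩ := hcircle p.2 q.2
  exact ⟨a, b, by rw [Prod.dist_eq, Prod.dist_eq]; exact congrArg₂ max ha hb⟩

/-- The torus map with lift `F`; the choice of representatives is irrelevant when `F` is
`ℤ²`-equivariant. -/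
noncomputable def toTorusMap (F : ℝ × ℝ → ℝ × ℝ) : Torus2 → Torus2 :=
  torusProj ∘ F ∘ Function.surjInv isOpenQuotientMap_torusProj.surjective

namespace IsIntEquivariant

variable {F G : ℝ × ℝ → ℝ × ℝ}

lemma comp (hF : IsIntEquivariant F) (hG : IsIntEquivariant G) : IsIntEquivariant (F ∘ G) :=
  fun p a b => by simp only [Function.comp_apply, hG p a b, hF (G p) a b]

lemma isLiftOf_toTorusMap (hF : IsIntEquivariant F) : IsLiftOf F (toTorusMap F) := by
  intro p
  obtain ⟨a, b, h⟩ := torusProj_eq_iff.1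
    (Function.surjInv_eq isOpenQuotientMap_torusProj.surjective (torusProj p)).symm
  rw [toTorusMap, Function.comp_apply, Function.comp_apply, h, hF, torusProj_add_int]

lemma toTorusMap_torusProj (hF : IsIntEquivariant F) (p : ℝ × ℝ) :
    toTorusMap F (torusProj p) = torusProj (F p) :=
  (hF.isLiftOf_toTorusMap p).symm

lemma toTorusMap_comp (hF : IsIntEquivariant F) (hG : IsIntEquivariant G) :
    toTorusMap (F ∘ G) = toTorusMap F ∘ toTorusMap G := by
  refine isOpenQuotientMap_torusProj.surjective.injective_comp_right (funext fun p => ?_)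
  simp only [Function.comp_apply, (hF.comp hG).toTorusMap_torusProj, hF.toTorusMap_torusProj,
    hG.toTorusMap_torusProj]

lemma continuous_toTorusMap (hF : IsIntEquivariant F) (hc : Continuous F) :
    Continuous (toTorusMap F) := by
  rw [← isOpenQuotientMap_torusProj.continuous_comp_iff,
    ← Function.Semiconj.comp_eq hF.isLiftOf_toTorusMap]
  exact isOpenQuotientMap_torusProj.continuous.comp hc

lemma toTorusMap_iterate (hF : IsIntEquivariant F) (n : ℕ) (p : ℝ × ℝ) :
    (toTorusMap F)^[n] (torusProj p) = torusProj (F^[n] p) :=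
  (Function.Semiconj.iterate_right hF.isLiftOf_toTorusMap n p).symm

lemma dist_torusProj_le (hF : IsIntEquivariant F) {L : ℝ≥0} (hL : LipschitzWith L F)
    (p q : ℝ × ℝ) :
    dist (torusProj (F p)) (torusProj (F q)) ≤ L * dist (torusProj p) (torusProj q) := by
  obtain ⟨a, b, h⟩ := exists_int_dist_eq p q
  rw [← h, ← torusProj_add_int (F q) a b, ← hF]
  exact (_root_.dist_torusProj_le _ _).trans (hL.dist_le_mul _ _)

lemma fderiv_add_int (hF : IsIntEquivariant F) (p : ℝ × ℝ) (a b : ℤ) :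
    fderiv ℝ F (p + ((a : ℝ), (b : ℝ))) = fderiv ℝ F p := by
  rw [← fderiv_comp_add_right, funext fun q => hF q a b, fderiv_add_const]

lemma exists_lipschitzWith (hF : IsIntEquivariant F) (hc : ContDiff ℝ 1 F) :
    ∃ L : ℝ≥0, LipschitzWith L F := by
  obtain ⟨C, hC⟩ := (isCompact_Icc (a := (0 : ℝ × ℝ)) (b := 1)).exists_bound_of_continuousOn
    (hc.continuous_fderiv one_ne_zero).continuousOn
  refine ⟨C.toNNReal, lipschitzWith_of_nnnorm_fderiv_le (𝕜 := ℝ)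
    (hc.differentiable one_ne_zero) fun p => ?_⟩
  obtain ⟨q, hq, a, b, rfl⟩ := exists_unitSquare_add_int p
  rw [hF.fderiv_add_int]
  exact NNReal.le_toNNReal_of_coe_le (hC q hq)

end IsIntEquivariant

/-! ### Area-preserving diffeomorphisms and their conjugates of the translation flow -/

lemma isIntEquivariant_id : IsIntEquivariant id := fun _ _ _ => rfl

lemma toTorusMap_id : toTorusMap id = id :=
  funext fun z => Function.surjInv_eq isOpenQuotientMap_torusProj.surjective z

/-- The permutation `h` of `ℝ²` is the lift of a smooth area-preserving diffeomorphism of `𝕋²`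
homotopic to the identity. -/
structure IsTorusDiffeo (h : Equiv.Perm (ℝ × ℝ)) : Prop where
  contDiff : ContDiff ℝ (⊤ : ℕ∞) h
  contDiff_inv : ContDiff ℝ (⊤ : ℕ∞) ⇑h⁻¹
  equivariant : IsIntEquivariant h
  measurePreserving : MeasurePreserving (toTorusMap h) volume volume

namespace IsTorusDiffeo

variable {h k : Equiv.Perm (ℝ × ℝ)}

lemma one : IsTorusDiffeo 1 where
  contDiff := contDiff_id
  contDiff_inv := contDiff_id
  equivariant := isIntEquivariant_id
  measurePreserving := by
    rw [Equiv.Perm.coe_one, toTorusMap_id]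
    exact MeasurePreserving.id _

lemma mul (hh : IsTorusDiffeo h) (hk : IsTorusDiffeo k) : IsTorusDiffeo (h * k) where
  contDiff := hh.contDiff.comp hk.contDiff
  contDiff_inv := by
    rw [mul_inv_rev]
    exact hk.contDiff_inv.comp hh.contDiff_inv
  equivariant := hh.equivariant.comp hk.equivariant
  measurePreserving := by
    rw [Equiv.Perm.coe_mul, hh.equivariant.toTorusMap_comp hk.equivariant]
    exact hh.measurePreserving.comp hk.measurePreserving

lemma equivariant_inv (hh : IsTorusDiffeo h) : IsIntEquivariant ⇑h⁻¹ := fun p a b => by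
  rw [Equiv.Perm.inv_eq_iff_eq, hh.equivariant, Equiv.Perm.coe_inv, Equiv.apply_symm_apply]

lemma leftInverse_toTorusMap_inv (hh : IsTorusDiffeo h) :
    Function.LeftInverse (toTorusMap ⇑h⁻¹) (toTorusMap h) := by
  rw [Function.leftInverse_iff_comp, ← hh.equivariant_inv.toTorusMap_comp hh.equivariant,
    ← Equiv.Perm.coe_mul, inv_mul_cancel, Equiv.Perm.coe_one, toTorusMap_id]

lemma inv (hh : IsTorusDiffeo h) : IsTorusDiffeo h⁻¹ where
  contDiff := hh.contDiff_inv
  contDiff_inv := by rw [inv_inv]; exact hh.contDiff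
  equivariant := hh.equivariant_inv
  measurePreserving := by
    have hm : Measurable (toTorusMap ⇑h⁻¹) :=
      (hh.equivariant_inv.continuous_toTorusMap hh.contDiff_inv.continuous).measurable
    have hid : MeasurePreserving (toTorusMap ⇑h⁻¹ ∘ toTorusMap h) volume volume := by
      rw [hh.leftInverse_toTorusMap_inv.comp_eq_id]
      exact MeasurePreserving.id _
    simpa only [hh.measurePreserving.map_eq] using
      hid.map_of_comp hm hh.measurePreserving.measurable

lemma exists_lipschitzWith (hh : IsTorusDiffeo h) : ∃ L : ℝ≥0, LipschitzWith L h :=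
  hh.equivariant.exists_lipschitzWith (hh.contDiff.of_le (mod_cast le_top))

end IsTorusDiffeo

/-- The vertical shear `(x, y) ↦ (x, y + f x)`. -/
def verticalShear (f : ℝ → ℝ) : Equiv.Perm (ℝ × ℝ) where
  toFun p := (p.1, p.2 + f p.1)
  invFun p := (p.1, p.2 - f p.1)
  left_inv p := by simp only [add_sub_cancel_right]
  right_inv p := by simp only [sub_add_cancel]

/-- The horizontal shear `(x, y) ↦ (x + f y, y)`. -/
def horizontalShear (f : ℝ → ℝ) : Equiv.Perm (ℝ × ℝ) where
  toFun p := (p.1 + f p.2, p.2)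
  invFun p := (p.1 - f p.2, p.2)
  left_inv p := by simp only [add_sub_cancel_right]
  right_inv p := by simp only [sub_add_cancel]

@[simp]
lemma verticalShear_apply (f : ℝ → ℝ) (p : ℝ × ℝ) : verticalShear f p = (p.1, p.2 + f p.1) := rfl

@[simp]
lemma verticalShear_inv_apply (f : ℝ → ℝ) (p : ℝ × ℝ) :
    (verticalShear f)⁻¹ p = (p.1, p.2 - f p.1) := rfl

@[simp]
lemma horizontalShear_apply (f : ℝ → ℝ) (p : ℝ × ℝ) :
    horizontalShear f p = (p.1 + f p.2, p.2) := rfl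

@[simp]
lemma horizontalShear_inv_apply (f : ℝ → ℝ) (p : ℝ × ℝ) :
    (horizontalShear f)⁻¹ p = (p.1 - f p.2, p.2) := rfl

section Shears

variable {f : ℝ → ℝ} (hf : Function.Periodic f 1)
include hf

lemma isIntEquivariant_verticalShear : IsIntEquivariant (verticalShear f) := fun p a b => by
  have hfa : f (p.1 + a) = f p.1 := by simpa only [mul_one] using hf.int_mul a p.1
  simp only [verticalShear_apply, Prod.fst_add, Prod.snd_add, hfa, Prod.mk_add_mk,
    add_right_comm]

lemma isIntEquivariant_horizontalShear : IsIntEquivariant (horizontalShear f) := fun p a b => by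
  have hfb : f (p.2 + b) = f p.2 := by simpa only [mul_one] using hf.int_mul b p.2
  simp only [horizontalShear_apply, Prod.fst_add, Prod.snd_add, hfb, Prod.mk_add_mk,
    add_right_comm]

lemma measurePreserving_verticalShear (hc : Continuous f) :
    MeasurePreserving (toTorusMap (verticalShear f)) volume volume := by
  have hequiv := isIntEquivariant_verticalShear hf
  have hcont : Continuous (toTorusMap (verticalShear f)) := hequiv.continuous_toTorusMap
    (continuous_fst.prodMk (continuous_snd.add (hc.comp continuous_fst)))
  have heq : toTorusMap (verticalShear f) =
      fun z : Torus1 × Torus1 => (id z.1, z.2 + ((hf.lift z.1 : ℝ) : Torus1)) :=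
    isOpenQuotientMap_torusProj.surjective.injective_comp_right
      (funext fun p => hequiv.toTorusMap_torusProj p)
  rw [heq] at hcont ⊢
  exact (MeasurePreserving.id _).skew_product
    (g := fun (x : Torus1) (y : Torus1) => y + ((hf.lift x : ℝ) : Torus1)) hcont.measurable.snd
    (Eventually.of_forall fun _ => map_add_right_eq_self volume _)

lemma measurePreserving_horizontalShear (hc : Continuous f) :
    MeasurePreserving (toTorusMap (horizontalShear f)) volume volume := by
  have heq : toTorusMap (horizontalShear f) =
      Prod.swap ∘ toTorusMap (verticalShear f) ∘ Prod.swap := by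
    refine isOpenQuotientMap_torusProj.surjective.injective_comp_right (funext fun p => ?_)
    have hp : Prod.swap (torusProj p) = torusProj p.swap := rfl
    simp only [Function.comp_apply, hp, (isIntEquivariant_horizontalShear hf).toTorusMap_torusProj,
      (isIntEquivariant_verticalShear hf).toTorusMap_torusProj]
    rfl
  have hswap : MeasurePreserving (Prod.swap : Torus2 → Torus2) volume volume :=
    Measure.measurePreserving_swap
  rw [heq]
  exact hswap.comp ((measurePreserving_verticalShear hf hc).comp hswap)

lemma IsTorusDiffeo.verticalShear (hc : ContDiff ℝ (⊤ : ℕ∞) f) :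
    IsTorusDiffeo (verticalShear f) where
  contDiff := contDiff_fst.prodMk (contDiff_snd.add (hc.comp contDiff_fst))
  contDiff_inv := contDiff_fst.prodMk (contDiff_snd.sub (hc.comp contDiff_fst))
  equivariant := isIntEquivariant_verticalShear hf
  measurePreserving := measurePreserving_verticalShear hf hc.continuous

lemma IsTorusDiffeo.horizontalShear (hc : ContDiff ℝ (⊤ : ℕ∞) f) :
    IsTorusDiffeo (horizontalShear f) where
  contDiff := (contDiff_fst.add (hc.comp contDiff_snd)).prodMk contDiff_snd
  contDiff_inv := (contDiff_fst.sub (hc.comp contDiff_snd)).prodMk contDiff_snd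
  equivariant := isIntEquivariant_horizontalShear hf
  measurePreserving := measurePreserving_horizontalShear hf hc.continuous

end Shears

/-- The translation of the plane by `(t, 0)`. -/
def shift (t : ℝ) : Equiv.Perm (ℝ × ℝ) := Equiv.addRight (t, 0)

@[simp]
lemma shift_apply (t : ℝ) (p : ℝ × ℝ) : shift t p = p + (t, 0) := rfl

lemma shift_add (s t : ℝ) : shift (s + t) = shift s * shift t := by
  ext p <;> simp [add_assoc, add_comm t]

lemma shift_zero : shift 0 = 1 := by
  ext p <;> simp

lemma isTorusDiffeo_shift (t : ℝ) : IsTorusDiffeo (shift t) := by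
  convert IsTorusDiffeo.horizontalShear (f := fun _ => t) (fun _ => rfl) contDiff_const using 1
  ext p <;> simp

/-- The time-`t` map of the translation flow in the first coordinate, conjugated by `h`. -/
def conjShift (h : Equiv.Perm (ℝ × ℝ)) (t : ℝ) : Equiv.Perm (ℝ × ℝ) := h * shift t * h⁻¹

lemma conjShift_apply (h : Equiv.Perm (ℝ × ℝ)) (t : ℝ) (p : ℝ × ℝ) :
    conjShift h t p = h (h⁻¹ p + (t, 0)) := rfl

lemma conjShift_apply_apply (h : Equiv.Perm (ℝ × ℝ)) (t : ℝ) (p : ℝ × ℝ) :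
    conjShift h t (h p) = h (p + (t, 0)) := by
  rw [conjShift_apply, Equiv.Perm.coe_inv, Equiv.symm_apply_apply]

lemma inv_conjShift_apply (h : Equiv.Perm (ℝ × ℝ)) (t : ℝ) (p : ℝ × ℝ) :
    h⁻¹ (conjShift h t p) = h⁻¹ p + (t, 0) := by
  rw [conjShift_apply, Equiv.Perm.coe_inv, Equiv.symm_apply_apply]

lemma conjShift_zero (h : Equiv.Perm (ℝ × ℝ)) : conjShift h 0 = 1 := by
  rw [conjShift, shift_zero, mul_one, mul_inv_cancel]

lemma conjShift_add (h : Equiv.Perm (ℝ × ℝ)) (s t : ℝ) :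
    conjShift h (s + t) = conjShift h s * conjShift h t := by
  simp only [conjShift, shift_add, mul_assoc, inv_mul_cancel_left]

lemma conjShift_inv (h : Equiv.Perm (ℝ × ℝ)) (t : ℝ) :
    (conjShift h t)⁻¹ = conjShift h (-t) := by
  rw [inv_eq_iff_mul_eq_one, ← conjShift_add, add_neg_cancel, conjShift_zero]

lemma conjShift_iterate (h : Equiv.Perm (ℝ × ℝ)) (t : ℝ) (n : ℕ) :
    (conjShift h t)^[n] = conjShift h (n * t) := by
  induction n with
  | zero => rw [Nat.cast_zero, zero_mul, conjShift_zero]; rfl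
  | succ n ih =>
    rw [Function.iterate_succ, ih, Nat.cast_succ, add_one_mul, conjShift_add, Equiv.Perm.coe_mul]

lemma conjShift_mul_of_commute {h g : Equiv.Perm (ℝ × ℝ)} {t : ℝ} (hg : Commute g (shift t)) :
    conjShift (h * g) t = conjShift h t := by
  rw [conjShift, conjShift, mul_assoc h, hg.eq, mul_inv_rev]
  simp only [mul_assoc, mul_inv_cancel_left]

lemma IsTorusDiffeo.conjShift {h : Equiv.Perm (ℝ × ℝ)} (hh : IsTorusDiffeo h) (t : ℝ) :
    IsTorusDiffeo (conjShift h t) :=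
  (hh.mul (isTorusDiffeo_shift t)).mul hh.inv

/-! ### Closeness in the `C^r` topology -/

/-- The derivatives of `F - G` of order at most `r` are bounded by `ε` everywhere. -/
def CrClose {V W : Type*} [NormedAddCommGroup V] [NormedSpace ℝ V] [NormedAddCommGroup W]
    [NormedSpace ℝ W] (r : ℕ) (ε : ℝ) (F G : V → W) : Prop :=
  ∀ k ≤ r, ∀ x, ‖iteratedFDeriv ℝ k (fun y => F y - G y) x‖ ≤ ε

lemma continuous_iteratedFDeriv_snd {E V W : Type*} [NormedAddCommGroup E] [NormedSpace ℝ E]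
    [NormedAddCommGroup V] [NormedSpace ℝ V] [NormedAddCommGroup W] [NormedSpace ℝ W]
    {f : E × V → W} (hf : ContDiff ℝ (⊤ : ℕ∞) f) (k : ℕ) :
    Continuous fun z : E × V => iteratedFDeriv ℝ k (fun y => f (z.1, y)) z.2 := by
  have hpartial : ∀ z : E × V, iteratedFDeriv ℝ k (fun y => f (z.1, y)) z.2 =
      (iteratedFDeriv ℝ k f z).compContinuousLinearMap
        fun _ => ContinuousLinearMap.inr ℝ E V := fun z => by
    have hcomp : (fun y => f (z.1, y)) =
        (fun w => f ((z.1, 0) + w)) ∘ ContinuousLinearMap.inr ℝ E V := by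
      funext y
      simp only [Function.comp_apply, ContinuousLinearMap.inr_apply, Prod.mk_add_mk, add_zero,
        zero_add]
    have hf' : ContDiff ℝ (⊤ : ℕ∞) fun w => f ((z.1, 0) + w) :=
      hf.comp (contDiff_const.add contDiff_id)
    rw [hcomp, ContinuousLinearMap.iteratedFDeriv_comp_right _ hf' _ (mod_cast le_top),
      iteratedFDeriv_comp_add_left]
    simp only [ContinuousLinearMap.inr_apply, Prod.mk_add_mk, add_zero, zero_add]
  simp only [hpartial]
  exact (ContinuousMultilinearMap.compContinuousLinearMapL
    fun _ => ContinuousLinearMap.inr ℝ E V).continuous.comp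
      (hf.continuous_iteratedFDeriv (mod_cast le_top))

lemma eventually_crClose {E : Type*} [NormedAddCommGroup E] [NormedSpace ℝ E]
    {G : E × (ℝ × ℝ) → ℝ × ℝ} (hG : ContDiff ℝ (⊤ : ℕ∞) G)
    (hper : ∀ τ, IsIntEquivariant fun p => G (τ, p)) (r : ℕ) {ε : ℝ} (hε : 0 < ε) (τ₀ : E) :
    ∀ᶠ τ in 𝓝 τ₀, CrClose r ε (fun p => G (τ, p)) fun p => G (τ₀, p) := by
  let D : ℕ → E × (ℝ × ℝ) → ℝ := fun k z =>
    ‖iteratedFDeriv ℝ k (fun y => G (z.1, y) - G (τ₀, y)) z.2‖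
  have hD : ∀ k, Continuous (D k) := fun k => (continuous_iteratedFDeriv_snd
    (hG.sub (hG.comp (contDiff_const.prodMk contDiff_snd))) k).norm
  have hD₀ : ∀ k p, D k (τ₀, p) < ε := fun k p => by
    simpa only [D, sub_self, iteratedFDeriv_fun_zero, Pi.zero_apply, norm_zero] using hε
  have hDper : ∀ k τ p (a b : ℤ), D k (τ, p + ((a : ℝ), (b : ℝ))) = D k (τ, p) := by
    intro k τ p a b
    have hdiff : (fun y => G (τ, y + ((a : ℝ), (b : ℝ))) - G (τ₀, y + ((a : ℝ), (b : ℝ)))) =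
        fun y => G (τ, y) - G (τ₀, y) := funext fun y =>
      (congrArg₂ (· - ·) (hper τ y a b) (hper τ₀ y a b)).trans (add_sub_add_right_eq_sub _ _ _)
    simp only [D]
    rw [← iteratedFDeriv_comp_add_right, hdiff]
  have hsquare : ∀ k, ∀ᶠ τ in 𝓝 τ₀, ∀ p ∈ Icc (0 : ℝ × ℝ) 1, D k (τ, p) < ε := fun k =>
    isCompact_Icc.eventually_forall_of_forall_eventually fun p _ =>
      (hD k).continuousAt.eventually_lt continuousAt_const (hD₀ k p)
  filter_upwards [(Set.finite_Iic r).eventually_all.2 fun k _ => hsquare k] with τ hτ k hk p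
  obtain ⟨q, hq, a, b, rfl⟩ := exists_unitSquare_add_int p
  exact (hDper k τ q a b).trans_le (hτ k hk q hq).le

/-! ### Conjugation by vertical shears -/

lemma lipschitzWith_verticalShear {f : ℝ → ℝ} {C : ℝ≥0} (hf : LipschitzWith C f) :
    LipschitzWith (1 + C) (verticalShear f) := by
  refine ((LipschitzWith.prod_fst.prodMk (LipschitzWith.prod_snd.add
    (hf.comp LipschitzWith.prod_fst))).weaken ?_)
  simp

lemma commute_verticalShear_shift {f : ℝ → ℝ} {β : ℝ} (hf : Function.Periodic f β) :
    Commute (verticalShear f) (shift β) := by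
  ext p <;> simp [hf p.1]

lemma commute_horizontalShear_shift (f : ℝ → ℝ) (β : ℝ) :
    Commute (horizontalShear f) (shift β) := by
  ext p <;> simp [add_right_comm]

lemma conjShift_verticalShear_apply (f : ℝ → ℝ) (t : ℝ) (p : ℝ × ℝ) :
    conjShift (verticalShear f) t p = (p.1 + t, p.2 + (f (p.1 + t) - f p.1)) := by
  simp only [conjShift_apply, verticalShear_inv_apply, verticalShear_apply, Prod.mk_add_mk,
    add_zero, sub_add_eq_add_sub, add_sub_assoc]

lemma dist_conjShift_le {h : Equiv.Perm (ℝ × ℝ)} {L : ℝ≥0} (hL : LipschitzWith L h) (t : ℝ)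
    (p : ℝ × ℝ) : dist (conjShift h t p) p ≤ L * |t| := by
  have hp : h (h⁻¹ p) = p := h.apply_symm_apply p
  calc dist (conjShift h t p) p = dist (h (h⁻¹ p + (t, 0))) (h (h⁻¹ p)) := by
        rw [conjShift_apply, hp]
    _ ≤ L * dist (h⁻¹ p + (t, 0)) (h⁻¹ p) := hL.dist_le_mul _ _
    _ = L * |t| := by simp [dist_eq_norm, Prod.norm_def]

lemma dist_conjShift_mul_add_le {h g : Equiv.Perm (ℝ × ℝ)} {β : ℝ} (hg : Commute g (shift β))
    {L : ℝ≥0} (hL : LipschitzWith L (h * g)) (t : ℝ) (p : ℝ × ℝ) :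
    dist (conjShift (h * g) (β + t) p) (conjShift h β p) ≤ L * |t| := by
  rw [add_comm β, conjShift_add, Equiv.Perm.mul_apply, conjShift_mul_of_commute hg]
  exact dist_conjShift_le hL t _

/-- The vertical shear with profile `s sin (2πMx)`. -/
noncomputable def sineShear (s : ℝ) (M : ℕ) : Equiv.Perm (ℝ × ℝ) :=
  verticalShear fun x => s * Real.sin (2 * Real.pi * (M * x))

lemma periodic_sine (s : ℝ) {M : ℕ} {β : ℝ} (hβ : ∃ c : ℤ, M * β = c) :
    Function.Periodic (fun x => s * Real.sin (2 * Real.pi * (M * x))) β := fun x => by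
  obtain ⟨c, hc⟩ := hβ
  simp only [mul_add, hc, mul_comm (2 * Real.pi) (c : ℝ), Real.sin_add_int_mul_two_pi]

lemma isTorusDiffeo_sineShear (s : ℝ) (M : ℕ) : IsTorusDiffeo (sineShear s M) :=
  IsTorusDiffeo.verticalShear (periodic_sine s ⟨M, by simp⟩)
    (contDiff_const.mul (Real.contDiff_sin.comp (by fun_prop)))

lemma commute_sineShear_shift (s : ℝ) {M : ℕ} {β : ℝ} (hβ : ∃ c : ℤ, M * β = c) :
    Commute (sineShear s M) (shift β) :=
  commute_verticalShear_shift (periodic_sine s hβ)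

lemma lipschitzWith_sine (s : ℝ≥0) (M : ℕ) :
    LipschitzWith (s * (2 * NNReal.pi * M)) fun x => s * Real.sin (2 * Real.pi * (M * x)) := by
  have hlinear : LipschitzWith (2 * NNReal.pi * M) fun x : ℝ => 2 * Real.pi * (M * x) := by
    refine LipschitzWith.of_dist_le_mul fun x y => le_of_eq ?_
    have hfactor : 2 * Real.pi * (M * x) - 2 * Real.pi * (M * y) =
        2 * Real.pi * M * (x - y) := by ring
    rw [Real.dist_eq, Real.dist_eq, hfactor, abs_mul, abs_of_nonneg (by positivity)]
    push_cast
    rw [NNReal.coe_real_pi]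
  have hsine := Real.lipschitzWith_sin.comp hlinear
  rw [one_mul] at hsine
  refine LipschitzWith.of_dist_le_mul fun x y => ?_
  have hs := mul_le_mul_of_nonneg_left (hsine.dist_le_mul x y) s.2
  rwa [Real.dist_eq, ← mul_sub, abs_mul, NNReal.abs_eq, NNReal.coe_mul, mul_assoc (s : ℝ),
    ← Real.dist_eq]

lemma lipschitzWith_sineShear (s : ℝ≥0) (M : ℕ) :
    LipschitzWith (1 + s * (2 * NNReal.pi * M)) (sineShear s M) :=
  lipschitzWith_verticalShear (lipschitzWith_sine s M)

/-- A family of maps, smooth in its parameters, which contains the conjugated translations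
`conjShift (sineShear s M) t` for `τ = (t, s (cos (2πMt) - 1), s sin (2πMt))`, and which keeps the
unbounded amplitude `s` under control when `s * t` is small. -/
noncomputable def sineFamily (M : ℕ) (τ : ℝ × ℝ × ℝ) (p : ℝ × ℝ) : ℝ × ℝ :=
  (p.1 + τ.1, p.2 + (τ.2.1 * Real.sin (2 * Real.pi * (M * p.1)) +
    τ.2.2 * Real.cos (2 * Real.pi * (M * p.1))))

lemma conjShift_sineShear (s : ℝ) (M : ℕ) (t : ℝ) (p : ℝ × ℝ) :
    conjShift (sineShear s M) t p = sineFamily M (t, s * (Real.cos (2 * Real.pi * (M * t)) - 1),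
      s * Real.sin (2 * Real.pi * (M * t))) p := by
  rw [sineShear, conjShift_verticalShear_apply, sineFamily, mul_add (M : ℝ), mul_add (2 * Real.pi),
    Real.sin_add]
  congr 2
  ring

lemma contDiff_sineFamily (M : ℕ) :
    ContDiff ℝ (⊤ : ℕ∞) fun z : (ℝ × ℝ × ℝ) × (ℝ × ℝ) => sineFamily M z.1 z.2 := by
  unfold sineFamily
  fun_prop

lemma isIntEquivariant_sineFamily (M : ℕ) (τ : ℝ × ℝ × ℝ) :
    IsIntEquivariant (sineFamily M τ) := fun p a b => by
  have harg : 2 * Real.pi * (M * (p.1 + a)) =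
      2 * Real.pi * (M * p.1) + ((M * a : ℤ) : ℝ) * (2 * Real.pi) := by
    push_cast
    ring
  simp only [sineFamily, Prod.fst_add, Prod.snd_add, harg, Real.sin_add_int_mul_two_pi,
    Real.cos_add_int_mul_two_pi, Prod.mk_add_mk, add_right_comm]

lemma tendsto_sineFamily_param {ι : Type*} {l : Filter ι} (M : ℕ) {s t : ι → ℝ}
    (ht : Tendsto t l (𝓝 0)) (hst : Tendsto (fun i => s i * t i) l (𝓝 0)) :
    Tendsto (fun i => ((t i, s i * (Real.cos (2 * Real.pi * (M * t i)) - 1),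
      s i * Real.sin (2 * Real.pi * (M * t i))) : ℝ × ℝ × ℝ)) l (𝓝 0) := by
  have hbound : Tendsto (fun i => |s i * t i| * (2 * Real.pi * M)) l (𝓝 0) := by
    simpa only [abs_zero, zero_mul] using hst.abs.mul_const (2 * Real.pi * M)
  have hle : ∀ i, |s i| * |2 * Real.pi * (M * t i)| = |s i * t i| * (2 * Real.pi * M) := by
    intro i
    rw [abs_mul (2 * Real.pi), abs_mul (M : ℝ), Nat.abs_cast, abs_of_pos Real.two_pi_pos, abs_mul]
    ring
  refine ht.prodMk_nhds (Tendsto.prodMk_nhds (squeeze_zero_norm (fun i => ?_) hbound)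
    (squeeze_zero_norm (fun i => ?_) hbound))
  · rw [Real.norm_eq_abs, abs_mul, ← hle]
    refine mul_le_mul_of_nonneg_left ?_ (abs_nonneg _)
    simpa only [Real.cos_zero, sub_zero] using
      Real.abs_cos_sub_cos_le (2 * Real.pi * (M * t i)) 0
  · rw [Real.norm_eq_abs, abs_mul, ← hle]
    exact mul_le_mul_of_nonneg_left Real.abs_sin_le_abs (abs_nonneg _)

lemma eventually_crClose_conjShift_mul_sineShear {ι : Type*} {l : Filter ι}
    {h : Equiv.Perm (ℝ × ℝ)} (hh : IsTorusDiffeo h) {M : ℕ} {β : ℝ} (hβ : ∃ c : ℤ, M * β = c)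
    {s t : ι → ℝ} (ht : Tendsto t l (𝓝 0)) (hst : Tendsto (fun i => s i * t i) l (𝓝 0)) (r : ℕ)
    {ε : ℝ} (hε : 0 < ε) :
    ∀ᶠ i in l, CrClose r ε (conjShift (h * sineShear (s i) M) (β + t i)) (conjShift h β) := by
  let G : (ℝ × ℝ × ℝ) × (ℝ × ℝ) → ℝ × ℝ := fun z =>
    h (sineFamily M z.1 (h⁻¹ (conjShift h β z.2)))
  have hG : ContDiff ℝ (⊤ : ℕ∞) G := hh.contDiff.comp ((contDiff_sineFamily M).comp
    (contDiff_fst.prodMk (hh.contDiff_inv.comp ((hh.conjShift β).contDiff.comp contDiff_snd))))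
  have hper : ∀ τ, IsIntEquivariant fun p => G (τ, p) := fun τ =>
    hh.equivariant.comp ((isIntEquivariant_sineFamily M τ).comp
      (hh.equivariant_inv.comp (hh.conjShift β).equivariant))
  have hG₀ : ∀ p, G (0, p) = conjShift h β p := fun p => by
    simp [G, sineFamily]
  have hGi : ∀ i p, G ((t i, s i * (Real.cos (2 * Real.pi * (M * t i)) - 1),
      s i * Real.sin (2 * Real.pi * (M * t i))), p) =
      conjShift (h * sineShear (s i) M) (β + t i) p := fun i p => by
    rw [add_comm β, conjShift_add, Equiv.Perm.mul_apply,
      conjShift_mul_of_commute (commute_sineShear_shift (s i) hβ)]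
    simp only [G, ← conjShift_sineShear]
    rw [conjShift_apply (h * _), mul_inv_rev]
    rfl
  filter_upwards [(tendsto_sineFamily_param M ht hst).eventually
    (eventually_crClose hG hper r hε 0)] with i hi
  simpa only [hG₀, hGi] using hi

/-! ### The twist built from a smooth sawtooth -/

lemma contDiff_comp_fract {E : Type*} [NormedAddCommGroup E] [NormedSpace ℝ E] {f : ℝ → E}
    {n : WithTop ℕ∞} (hf : ContDiff ℝ n f) (hsupp : Function.support f ⊆ Ioo 0 1) :
    ContDiff ℝ n fun x => f (Int.fract x) := by
  refine contDiff_iff_contDiffAt.2 fun x => ?_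
  have hlocal : (fun y => f (Int.fract y)) =ᶠ[𝓝 x] fun y => f (y - ⌊x⌋) + f (y - ⌊x⌋ + 1) := by
    filter_upwards [Ioo_mem_nhds (a := (⌊x⌋ : ℝ) - 1) (by linarith [Int.floor_le x])
      (Int.lt_floor_add_one x)] with y ⟨hy₁, hy₂⟩
    have hzero : ∀ z, z ∉ Ioo (0 : ℝ) 1 → f z = 0 := fun z hz =>
      Function.notMem_support.1 fun h => hz (hsupp h)
    rcases lt_or_ge y ⌊x⌋ with hy | hy
    · have hfloor : ⌊y⌋ = ⌊x⌋ - 1 := Int.floor_eq_iff.2 (by push_cast; constructor <;> linarith)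
      have hfract : Int.fract y = y - ⌊x⌋ + 1 := by
        rw [← Int.self_sub_floor, hfloor]
        push_cast
        ring
      rw [hfract, hzero (y - ⌊x⌋) fun h => by linarith [h.1], zero_add]
    · have hfloor : ⌊y⌋ = ⌊x⌋ := Int.floor_eq_iff.2 ⟨hy, hy₂⟩
      rw [← Int.self_sub_floor, hfloor, hzero (y - ⌊x⌋ + 1) fun h => by linarith [h.2], add_zero]
  exact ContDiffAt.congr_of_eventuallyEq (by fun_prop) hlocal

/-- A smooth version of the sawtooth `x ↦ Int.fract x`: a `1`-periodic function with values in
`[-1, 1]` which is the identity on `[η, 1 - η]`. -/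
structure IsSmoothSawtooth (η : ℝ) (b : ℝ → ℝ) : Prop where
  periodic : Function.Periodic b 1
  contDiff : ContDiff ℝ (⊤ : ℕ∞) b
  abs_le_one : ∀ x, |b x| ≤ 1
  apply_eq : ∀ x ∈ Icc η (1 - η), b x = x

lemma exists_isSmoothSawtooth {η : ℝ} (h₀ : 0 < η) (h₁ : η < 1 / 2) :
    ∃ b, IsSmoothSawtooth η b := by
  let χ : ContDiffBump (1 / 2 : ℝ) := ⟨1 / 2 - η, 1 / 2, by linarith, by linarith⟩
  have hsupp : Function.support (fun x => x * χ x) ⊆ Ioo 0 1 := by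
    refine (Function.support_mul_subset_right _ _).trans ?_
    rw [χ.support_eq, Real.ball_eq_Ioo]
    norm_num
  refine ⟨fun x => Int.fract x * χ (Int.fract x), fun x => by simp only [Int.fract_add_one],
    contDiff_comp_fract (contDiff_id.mul χ.contDiff) hsupp, fun x => ?_, fun x hx => ?_⟩
  · rw [abs_of_nonneg (mul_nonneg (Int.fract_nonneg x) χ.nonneg)]
    exact mul_le_one₀ (Int.fract_lt_one x).le χ.nonneg χ.le_one
  · have hfract : Int.fract x = x :=
      Int.fract_eq_self.2 ⟨by linarith [hx.1], by linarith [hx.2]⟩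
    have hχ : χ x = 1 := χ.one_of_mem_closedBall <| by
      change |x - 1 / 2| ≤ 1 / 2 - η
      exact abs_le.2 ⟨by linarith [hx.1], by linarith [hx.2]⟩
    rw [hfract, hχ, mul_one]

/-- The composition of two shears whose inverse sends most of a rectangle of size `1 / Q × 1` to a
set of diameter `1 / Q` in the horizontal direction, the horizontal coordinate of the image
encoding the vertical coordinate of the point when `b` is a smooth sawtooth. -/
noncomputable def twist (b : ℝ → ℝ) (Q : ℕ) : Equiv.Perm (ℝ × ℝ) :=
  verticalShear (fun x => -b (Q * x)) * horizontalShear fun y => b y / Q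

lemma twist_apply (b : ℝ → ℝ) (Q : ℕ) (p : ℝ × ℝ) :
    twist b Q p = (p.1 + b p.2 / Q, p.2 - b (Q * (p.1 + b p.2 / Q))) := by
  simp [twist, sub_eq_add_neg]

lemma twist_inv_apply (b : ℝ → ℝ) (Q : ℕ) (p : ℝ × ℝ) :
    (twist b Q)⁻¹ p = (p.1 - b (p.2 + b (Q * p.1)) / Q, p.2 + b (Q * p.1)) := by
  rw [twist, mul_inv_rev, Equiv.Perm.mul_apply, verticalShear_inv_apply, horizontalShear_inv_apply,
    sub_neg_eq_add]

lemma periodic_comp_natCast_mul {b : ℝ → ℝ} (hb : Function.Periodic b 1) {Q : ℕ} {β : ℝ}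
    (hβ : ∃ c : ℤ, Q * β = c) : Function.Periodic (fun x => b (Q * x)) β := fun x => by
  obtain ⟨c, hc⟩ := hβ
  simpa only [mul_add, hc, mul_one] using hb.int_mul c (Q * x)

lemma commute_twist_shift {b : ℝ → ℝ} (hb : Function.Periodic b 1) {Q : ℕ} {β : ℝ}
    (hβ : ∃ c : ℤ, Q * β = c) : Commute (twist b Q) (shift β) :=
  have hper : Function.Periodic (fun x => -b (Q * x)) β :=
    (periodic_comp_natCast_mul hb hβ).comp Neg.neg
  (commute_verticalShear_shift hper).mul_left (commute_horizontalShear_shift _ β)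

lemma isTorusDiffeo_twist {b : ℝ → ℝ} (hb : Function.Periodic b 1)
    (hc : ContDiff ℝ (⊤ : ℕ∞) b) (Q : ℕ) : IsTorusDiffeo (twist b Q) := by
  have hvertical : Function.Periodic (fun x => -b (Q * x)) 1 :=
    (periodic_comp_natCast_mul hb ⟨Q, by simp⟩).comp Neg.neg
  have hhorizontal : Function.Periodic (fun y => b y / Q) 1 := hb.comp (· / (Q : ℝ))
  exact (IsTorusDiffeo.verticalShear hvertical (by fun_prop)).mul
    (IsTorusDiffeo.horizontalShear hhorizontal (by fun_prop))

/-! ### Separation of orbits -/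

lemma dist_sub_le_of_lipschitzWith {X Y : Type*} [PseudoMetricSpace X] [PseudoMetricSpace Y]
    {f : X → Y} {L : ℝ≥0} (hf : LipschitzWith L f) {x x' y y' : X} {δ : ℝ} (hx : dist x x' ≤ δ)
    (hy : dist y y' ≤ δ) : dist (f x) (f y) - 2 * L * δ ≤ dist (f x') (f y') := by
  have hx' := hf.dist_le_mul_of_le hx
  have hy' := hf.dist_le_mul_of_le hy
  rw [dist_comm] at hy'
  linarith [dist_triangle4 (f x) (f x') (f y') (f y)]

lemma exists_add_eq_add_of_periodic {f : ℝ → ℝ} {c : ℝ} (hper : Function.Periodic f c)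
    (hc : c ≠ 0) (hf : Continuous f) (a b : ℝ) : ∃ u, f (u + a) = f (u + b) := by
  obtain ⟨_, ⟨x, rfl⟩, hx⟩ :=
    (hper.compact_of_continuous hc hf).exists_isGreatest (range_nonempty f)
  have hmax : ∀ y, f y ≤ f x := fun y => hx (mem_range_self y)
  exact intermediate_value_univ₂ (a := x - b) (b := x - a) (by fun_prop) (by fun_prop)
    (by simpa using hmax _) (by simpa using hmax _)

lemma exists_int_abs_sub_div_le {Q : ℝ} (hQ : 0 < Q) (x u : ℝ) :
    ∃ j : ℤ, |x - (u + j) / Q| ≤ 1 / Q := by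
  refine ⟨⌊Q * x - u⌋, ?_⟩
  have hfract : x - (u + ⌊Q * x - u⌋) / Q = Int.fract (Q * x - u) / Q := by
    rw [← Int.self_sub_floor]
    field_simp
    ring
  rw [hfract, abs_of_nonneg (div_nonneg (Int.fract_nonneg _) hQ.le)]
  exact div_le_div_of_nonneg_right (Int.fract_lt_one _).le hQ.le

/-- On every horizontal circle there is a point which `h` maps at distance at least `e` from the
image of its vertical translate by `1 / 2`. -/
def SeparatesHalfTranslates (h : Equiv.Perm (ℝ × ℝ)) (e : ℝ) : Prop :=
  ∀ y : ℝ, ∃ x : ℝ, e ≤ dist (torusProj (h (x, y + 1 / 2))) (torusProj (h (x, y)))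

lemma separatesHalfTranslates_one : SeparatesHalfTranslates 1 (1 / 2) := fun y => by
  have hdist : dist ((y + 1 / 2 : ℝ) : Torus1) (y : Torus1) = 1 / 2 := by
    rw [dist_eq_norm, ← AddCircle.coe_sub, add_sub_cancel_left, UnitAddCircle.norm_eq, one_div,
      round_two_inv]
    norm_num
  exact ⟨0, hdist.ge.trans (le_max_right _ _)⟩

lemma dist_torusProj_comp_sub_le {h : ℝ × ℝ → ℝ × ℝ} {L : ℝ≥0} (hL : LipschitzWith L h)
    {x x₁ x₂ δ : ℝ} (h₁ : |x - x₁| ≤ δ) (h₂ : |x - x₂| ≤ δ) (y₁ y₂ : ℝ) :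
    dist (torusProj (h (x, y₁))) (torusProj (h (x, y₂))) - 2 * L * δ ≤
      dist (torusProj (h (x₁, y₁))) (torusProj (h (x₂, y₂))) := by
  have hclose : ∀ x' y : ℝ, |x - x'| ≤ δ → dist (x, y) (x', y) ≤ δ := fun x' y hx' => by
    rwa [Prod.dist_eq, dist_self, Real.dist_eq, max_eq_left (abs_nonneg _)]
  have hL' := lipschitzWith_torusProj.comp hL
  rw [one_mul] at hL'
  exact dist_sub_le_of_lipschitzWith hL' (hclose x₁ y₁ h₁) (hclose x₂ y₂ h₂)

namespace SeparatesHalfTranslates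

variable {h : Equiv.Perm (ℝ × ℝ)} {e : ℝ} {L : ℝ≥0}

lemma mul_twist (hs : SeparatesHalfTranslates h e) (hL : LipschitzWith L h) {η : ℝ} {b : ℝ → ℝ}
    (hb : IsSmoothSawtooth η b) {Q : ℕ} (hQ : 0 < Q) :
    SeparatesHalfTranslates (h * twist b Q) (e - 4 * L / Q) := fun y => by
  have hQ' : (0 : ℝ) < Q := Nat.cast_pos.2 hQ
  -- at the phase `u` the vertical shear moves both points of the pair by the same amount
  obtain ⟨u, hu⟩ := exists_add_eq_add_of_periodic hb.periodic one_ne_zero hb.contDiff.continuous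
    (b (y + 1 / 2)) (b y)
  obtain ⟨x, hx⟩ := hs (y - b (u + b y))
  obtain ⟨j, hj⟩ := exists_int_abs_sub_div_le hQ' x u
  have htwist : ∀ y', b (u + b y') = b (u + b y) →
      (h * twist b Q) ((u + j) / Q, y') = h ((u + j) / Q + b y' / Q, y' - b (u + b y)) := by
    intro y' hy'
    have harg : (Q : ℝ) * ((u + j) / Q + b y' / Q) = u + b y' + j := by field_simp; ring
    have hper : b (u + b y' + j) = b (u + b y') := by
      simpa only [mul_one] using hb.periodic.int_mul j (u + b y')
    rw [Equiv.Perm.mul_apply, twist_apply, harg, hper, hy']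
  have hclose : ∀ y', |x - ((u + j) / Q + b y' / Q)| ≤ 2 / Q := fun y' => by
    have hby : |b y' / Q| ≤ 1 / Q := by
      rw [abs_div, Nat.abs_cast]
      exact div_le_div_of_nonneg_right (hb.abs_le_one y') hQ'.le
    rw [← sub_sub, ← one_add_one_eq_two, add_div (1 : ℝ)]
    exact (abs_sub _ _).trans (add_le_add hj hby)
  refine ⟨(u + j) / Q, ?_⟩
  rw [htwist _ hu, htwist _ rfl, add_sub_right_comm]
  refine le_trans ?_ (dist_torusProj_comp_sub_le hL (hclose (y + 1 / 2)) (hclose y) _ _)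
  calc e - 4 * L / Q = e - 2 * L * (2 / Q) := by ring
    _ ≤ _ := sub_le_sub_right hx _

lemma mul_sineShear (hs : SeparatesHalfTranslates h e) (hL : LipschitzWith L h) (s : ℝ) {M : ℕ}
    (hM : 0 < M) : SeparatesHalfTranslates (h * sineShear s M) (e - 2 * L / M) := fun y => by
  have hM' : (0 : ℝ) < M := Nat.cast_pos.2 hM
  obtain ⟨x, hx⟩ := hs y
  obtain ⟨j, hj⟩ := exists_int_abs_sub_div_le hM' x 0
  rw [zero_add] at hj
  have hfix : ∀ y', (h * sineShear s M) (j / M, y') = h (j / M, y') := fun y' => by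
    have harg : 2 * Real.pi * (M * (j / M)) = j * (2 * Real.pi) := by field_simp
    rw [Equiv.Perm.mul_apply, sineShear, verticalShear_apply, harg]
    have hsin := Real.sin_add_int_mul_two_pi 0 j
    rw [zero_add, Real.sin_zero] at hsin
    rw [hsin, mul_zero, add_zero]
  refine ⟨j / M, ?_⟩
  rw [hfix, hfix]
  calc e - 2 * L / M = e - 2 * L * (1 / M) := by rw [mul_one_div]
    _ ≤ _ := sub_le_sub_right hx _
    _ ≤ _ := dist_torusProj_comp_sub_le hL hj hj _ _

end SeparatesHalfTranslates

lemma sine_sub_sine (s M x₁ x₂ t : ℝ) :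
    s * Real.sin (2 * Real.pi * (M * (x₁ + t))) - s * Real.sin (2 * Real.pi * (M * (x₂ + t))) =
      2 * s * Real.sin (Real.pi * (M * (x₁ - x₂))) *
        Real.cos (Real.pi * M * (x₁ + x₂ + 2 * t)) := by
  have hsub : (2 * Real.pi * (M * (x₁ + t)) - 2 * Real.pi * (M * (x₂ + t))) / 2 =
      Real.pi * (M * (x₁ - x₂)) := by ring
  have hadd : (2 * Real.pi * (M * (x₁ + t)) + 2 * Real.pi * (M * (x₂ + t))) / 2 =
      Real.pi * M * (x₁ + x₂ + 2 * t) := by ring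
  rw [← mul_sub, Real.sin_sub_sin, hsub, hadd]
  ring

lemma exists_sine_sub_sine_eq_half {s : ℝ} (hs : 0 < s) {M : ℝ} (hM : 0 < M) {x₁ x₂ : ℝ}
    (h₁ : 1 / 8 ≤ M * s * (x₁ - x₂)) (h₂ : M * (x₁ - x₂) ≤ 1 / 2) :
    ∃ t, s * Real.sin (2 * Real.pi * (M * (x₁ + t))) =
      s * Real.sin (2 * Real.pi * (M * (x₂ + t))) + 1 / 2 := by
  have hpos : 0 < M * (x₁ - x₂) := by
    refine pos_of_mul_pos_right (lt_of_lt_of_le (by norm_num : (0 : ℝ) < 1 / 8) ?_) hs.le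
    linarith
  have hsin : 2 * (M * (x₁ - x₂)) ≤ Real.sin (Real.pi * (M * (x₁ - x₂))) := by
    have hle := Real.mul_le_sin (x := Real.pi * (M * (x₁ - x₂)))
      (mul_nonneg Real.pi_pos.le hpos.le) (by nlinarith [Real.pi_pos])
    rwa [← mul_assoc, div_mul_cancel₀ _ Real.pi_ne_zero] at hle
  have hzero : Real.pi * M * (x₁ + x₂ + 2 * ((1 / (2 * M) - x₁ - x₂) / 2)) = Real.pi / 2 := by
    field_simp
    ring
  have hmax : Real.pi * M * (x₁ + x₂ + 2 * ((-x₁ - x₂) / 2)) = 0 := by ring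
  obtain ⟨t, ht⟩ := mem_range_of_exists_le_of_exists_ge (c := 1 / 2)
    (f := fun t => s * Real.sin (2 * Real.pi * (M * (x₁ + t))) -
      s * Real.sin (2 * Real.pi * (M * (x₂ + t)))) (by fun_prop)
    ⟨(1 / (2 * M) - x₁ - x₂) / 2, by
      rw [sine_sub_sine, hzero, Real.cos_pi_div_two, mul_zero]
      norm_num⟩
    ⟨(-x₁ - x₂) / 2, by
      rw [sine_sub_sine, hmax, Real.cos_zero, mul_one]
      nlinarith⟩
  exact ⟨t, by linarith [ht]⟩

lemma SeparatesHalfTranslates.exists_le_dist_mul_sineShear {h : Equiv.Perm (ℝ × ℝ)} {e : ℝ}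
    {L : ℝ≥0} (hh : SeparatesHalfTranslates h e) (hL : LipschitzWith L h) {s : ℝ} (hs : 0 < s)
    {M : ℕ} (hM : 0 < M) {x₁ x₂ : ℝ} (h₁ : 1 / 8 ≤ M * s * (x₁ - x₂))
    (h₂ : M * |x₁ - x₂| ≤ 1 / 2) :
    ∃ t, e - 4 * L / M ≤ dist (torusProj ((h * sineShear s M) (x₁ + t, 0)))
      (torusProj ((h * sineShear s M) (x₂ + t, 0))) := by
  have hM' : (0 : ℝ) < M := Nat.cast_pos.2 hM
  obtain ⟨v, hv⟩ := exists_sine_sub_sine_eq_half hs hM' h₁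
    ((mul_le_mul_of_nonneg_left (le_abs_self _) hM'.le).trans h₂)
  obtain ⟨x, hx⟩ := hh (s * Real.sin (2 * Real.pi * (M * (x₂ + v))))
  obtain ⟨j, hj⟩ := exists_int_abs_sub_div_le hM' (x - x₁ - v) 0
  rw [zero_add] at hj
  have hshear : ∀ x', (h * sineShear s M) (x' + (v + j / M), 0) =
      h (x' + (v + j / M), s * Real.sin (2 * Real.pi * (M * (x' + v)))) := fun x' => by
    have hper := periodic_sine s (M := M) (β := j / M) ⟨j, by field_simp⟩ (x' + v)
    simp only [add_assoc] at hper
    rw [Equiv.Perm.mul_apply, sineShear, verticalShear_apply, zero_add, hper]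
  have hclose₁ : |x - (x₁ + (v + j / M))| ≤ 2 / M := by
    rw [← sub_sub, ← sub_sub]
    exact hj.trans (by gcongr; norm_num)
  have hclose₂ : |x - (x₂ + (v + j / M))| ≤ 2 / M := by
    have hx₁₂ : |x₁ - x₂| ≤ 1 / M := by
      rw [le_div_iff₀' hM']
      linarith
    have hsplit : x - (x₂ + (v + j / M)) = x - x₁ - v - j / M + (x₁ - x₂) := by ring
    rw [hsplit, ← one_add_one_eq_two, add_div]
    exact (abs_add_le _ _).trans (add_le_add hj hx₁₂)
  refine ⟨v + j / M, ?_⟩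
  rw [hshear, hshear, hv]
  calc e - 4 * L / M = e - 2 * L * (2 / M) := by ring
    _ ≤ _ := sub_le_sub_right hx _
    _ ≤ _ := dist_torusProj_comp_sub_le hL hclose₁ hclose₂ _ _

lemma exists_lt_abs_sub_div_add_int_le {n : ℕ} (hn : 0 < n) (x : ℝ) :
    ∃ i < n, ∃ a : ℤ, |x - (i / n + a)| ≤ 1 / n := by
  have hn' : (0 : ℝ) < n := Nat.cast_pos.2 hn
  have hnonneg : 0 ≤ Int.fract x * n := mul_nonneg (Int.fract_nonneg x) hn'.le
  refine ⟨⌊Int.fract x * n⌋₊, (Nat.floor_lt hnonneg).2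
    (mul_lt_of_lt_one_left hn' (Int.fract_lt_one x)), ⌊x⌋, ?_⟩
  have herror : x - (⌊Int.fract x * n⌋₊ / n + ⌊x⌋) =
      (Int.fract x * n - ⌊Int.fract x * n⌋₊) / n := by
    rw [sub_div, mul_div_cancel_right₀ _ hn'.ne', ← Int.self_sub_floor]
    ring
  rw [herror, abs_of_nonneg (div_nonneg (sub_nonneg.2 (Nat.floor_le hnonneg)) hn'.le)]
  exact div_le_div_of_nonneg_right (by linarith [Nat.lt_floor_add_one (Int.fract x * n)]) hn'.le

lemma exists_lt_mul_abs_mul_sub_le {q l N : ℕ} (hq : 0 < q) (hl : 0 < l) (hN : 0 < N) {α : ℝ}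
    (hα : ∃ c : ℤ, q * α = c) (t : ℝ) :
    ∃ i < q * l * N, ∃ a : ℤ, |t + a - i * (α + 1 / ((q * l : ℕ) * N))| ≤ 1 / N := by
  obtain ⟨c, hc⟩ := hα
  obtain ⟨j, hj, a, ha⟩ := exists_lt_abs_sub_div_add_int_le (Nat.mul_pos hl hN) t
  refine ⟨q * j, by rw [mul_assoc]; exact Nat.mul_lt_mul_of_pos_left hj hq, j * c - a, ?_⟩
  have herror : t + ((j * c - a : ℤ) : ℝ) - (q * j : ℕ) * (α + 1 / ((q * l : ℕ) * N)) =
      t - (j / (l * N : ℕ) + a) := by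
    push_cast
    rw [← hc]
    field_simp
    ring
  rw [herror]
  refine ha.trans (one_div_le_one_div_of_le (Nat.cast_pos.2 hN) ?_)
  exact_mod_cast Nat.le_mul_of_pos_left N hl

lemma torusProj_conjShift_apply_add_int {h : Equiv.Perm (ℝ × ℝ)} (hh : IsIntEquivariant h)
    (t : ℝ) (a : ℤ) (p : ℝ × ℝ) :
    torusProj (conjShift h (t + a) (h p)) = torusProj (h (p + (t, 0))) := by
  have hsplit : p + (t + a, 0) = p + (t, 0) + ((a : ℝ), ((0 : ℤ) : ℝ)) := by
    ext <;> simp [add_assoc]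
  rw [conjShift_apply_apply, hsplit, hh, torusProj_add_int]

lemma exists_lt_forall_dist_conjShift {h : Equiv.Perm (ℝ × ℝ)} (hh : IsIntEquivariant h)
    {L : ℝ≥0} (hL : LipschitzWith L h) {q l N : ℕ} (hq : 0 < q) (hl : 0 < l) (hN : 0 < N) {α : ℝ}
    (hα : ∃ c : ℤ, q * α = c) (t : ℝ) :
    ∃ i < q * l * N, ∀ x₁ x₂,
      dist (torusProj (h (x₁ + t, 0))) (torusProj (h (x₂ + t, 0))) - 2 * L * (1 / N) ≤
        dist (torusProj (conjShift h (i * (α + 1 / ((q * l : ℕ) * N))) (h (x₁, 0))))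
          (torusProj (conjShift h (i * (α + 1 / ((q * l : ℕ) * N))) (h (x₂, 0)))) := by
  obtain ⟨i, hi, a, ha⟩ := exists_lt_mul_abs_mul_sub_le hq hl hN hα t
  refine ⟨i, hi, fun x₁ x₂ => ?_⟩
  set τ := i * (α + 1 / ((q * l : ℕ) * N))
  have hflow : ∀ x, torusProj (conjShift h τ (h (x, 0))) = torusProj (h (x + (τ - a), 0)) :=
    fun x => by
      rw [← sub_add_cancel τ (a : ℝ), torusProj_conjShift_apply_add_int hh, sub_add_cancel,
        Prod.mk_add_mk, add_zero]
  have hclose : ∀ x, dist (x + t, (0 : ℝ)) (x + (τ - a), 0) ≤ 1 / N := fun x => by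
    rwa [Prod.dist_eq, dist_self, max_eq_left dist_nonneg, dist_add_left, Real.dist_eq,
      sub_sub_eq_add_sub]
  have hL' := lipschitzWith_torusProj.comp hL
  rw [one_mul] at hL'
  rw [hflow, hflow]
  exact dist_sub_le_of_lipschitzWith hL' (hclose x₁) (hclose x₂)

/-! ### Counting orbits of the approximants -/

lemma dist_verticalShear_le {f : ℝ → ℝ} {C : ℝ≥0} (hf : LipschitzWith C f) (p p' : ℝ × ℝ) :
    dist (verticalShear f p) (verticalShear f p') ≤ (1 + C) * |p.1 - p'.1| + |p.2 - p'.2| := by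
  have hfst : 0 ≤ C * |p.1 - p'.1| := by positivity
  have hf' : |f p.1 - f p'.1| ≤ C * |p.1 - p'.1| := by
    simpa only [Real.dist_eq] using hf.dist_le_mul p.1 p'.1
  rw [verticalShear_apply, verticalShear_apply, Prod.dist_eq, Real.dist_eq, Real.dist_eq,
    add_sub_add_comm, one_add_mul]
  refine max_le ?_ ((abs_add_le _ _).trans ?_)
  · linarith [abs_nonneg (p.2 - p'.2)]
  · linarith [abs_nonneg (p.1 - p'.1)]

lemma toTorusMap_conjShift_iterate {h : Equiv.Perm (ℝ × ℝ)} (hh : IsTorusDiffeo h) (α : ℝ) (i : ℕ)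
    (p : ℝ × ℝ) :
    (toTorusMap (conjShift h α))^[i] (torusProj p) = torusProj (conjShift h (i * α) p) := by
  rw [(hh.conjShift α).equivariant.toTorusMap_iterate, conjShift_iterate]

lemma bowenCoverNum_conjShift_le_mul {h : Equiv.Perm (ℝ × ℝ)} (hh : IsTorusDiffeo h) {ε : ℝ}
    (hε : 0 < ε) {n₁ n₂ : ℕ} (hn₁ : 0 < n₁) (hn₂ : 0 < n₂)
    (hgrid : ∀ p p' : ℝ × ℝ, |p.1 - p'.1| ≤ 1 / n₁ → |p.2 - p'.2| ≤ 1 / n₂ →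
      dist (h p) (h p') < ε) (α : ℝ) (m : ℕ) :
    bowenCoverNum (toTorusMap (conjShift h α)) m ε ≤ n₁ * n₂ := by
  classical
  let F := (Finset.range n₁ ×ˢ Finset.range n₂).image fun ij : ℕ × ℕ =>
    torusProj (h (ij.1 / n₁, ij.2 / n₂))
  have hcard : F.card ≤ n₁ * n₂ := Finset.card_image_le.trans_eq (by
    rw [Finset.card_product, Finset.card_range, Finset.card_range])
  refine (bowenCoverNum_le_card (F := F) fun y => ?_).trans hcard
  obtain ⟨p, rfl⟩ := isOpenQuotientMap_torusProj.surjective y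
  obtain ⟨w, rfl⟩ := h.surjective p
  obtain ⟨i, hi, a, ha⟩ := exists_lt_abs_sub_div_add_int_le hn₁ w.1
  obtain ⟨j, hj, b, hb⟩ := exists_lt_abs_sub_div_add_int_le hn₂ w.2
  refine ⟨_, Finset.mem_image_of_mem _ (Finset.mk_mem_product (Finset.mem_range.2 hi)
    (Finset.mem_range.2 hj)), (bowenDist_lt_iff hε).2 fun k _ => ?_⟩
  rw [toTorusMap_conjShift_iterate hh, toTorusMap_conjShift_iterate hh,
    conjShift_apply_apply, conjShift_apply_apply, ← torusProj_add_int (h _) a b,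
    ← hh.equivariant]
  refine (dist_torusProj_le _ _).trans_lt (hgrid _ _ ?_ ?_)
  · rw [abs_sub_comm]
    simpa only [Prod.fst_add, add_right_comm _ (k * α) (a : ℝ), add_sub_add_right_eq_sub] using ha
  · rw [abs_sub_comm]
    simpa only [Prod.snd_add, add_zero] using hb

/-- A Lipschitz constant of `h * sineShear s M` when `h` is `L`-Lipschitz. -/
noncomputable def shearLip (L : ℝ≥0) (M : ℕ) (s : ℝ≥0) : ℝ≥0 :=
  L * (1 + s * (2 * NNReal.pi * M))

lemma lipschitzWith_mul_sineShear {h : Equiv.Perm (ℝ × ℝ)} {L : ℝ≥0} (hL : LipschitzWith L h)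
    (s : ℝ≥0) (M : ℕ) : LipschitzWith (shearLip L M s) (h * sineShear s M : Equiv.Perm _) :=
  hL.comp (lipschitzWith_sineShear s M)

/-- An upper bound for the number of Bowen balls of radius `1` needed by the maps
`conjShift (h * sineShear s M) α` when `h` is `L`-Lipschitz; see
`bowenCoverNum_conjShift_mul_sineShear_le` for smaller radii. -/
noncomputable def coverBound (L : ℝ≥0) (M : ℕ) (s : ℝ≥0) : ℝ :=
  (2 * shearLip L M s + 1) * (2 * L + 1)

lemma bowenCoverNum_conjShift_mul_sineShear_le {h : Equiv.Perm (ℝ × ℝ)} (hh : IsTorusDiffeo h)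
    {L : ℝ≥0} (hL : LipschitzWith L h) (s : ℝ≥0) (M : ℕ) {ε : ℝ} (hε : 0 < ε) (hε₁ : ε ≤ 1)
    (α : ℝ) (m : ℕ) :
    bowenCoverNum (toTorusMap (conjShift (h * sineShear s M) α)) m ε ≤
      coverBound L M s / ε ^ 2 := by
  set D : ℝ≥0 := 1 + s * (2 * NNReal.pi * M)
  have hfloor : ∀ A : ℝ, 0 ≤ A → ((⌊2 * A / ε⌋₊ + 1 : ℕ) : ℝ) ≤ (2 * A + 1) / ε := fun A hA => by
    have h₁ : 1 ≤ 1 / ε := (one_le_div₀ hε).2 hε₁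
    rw [add_div, Nat.cast_add, Nat.cast_one]
    exact add_le_add (Nat.floor_le (by positivity)) h₁
  have hsmall : ∀ A : ℝ, A * (1 / (⌊2 * A / ε⌋₊ + 1 : ℕ)) < ε / 2 := fun A => by
    have hlt := Nat.lt_floor_add_one (2 * A / ε)
    rw [mul_one_div, div_lt_iff₀ (by positivity)]
    rw [div_lt_iff₀ hε] at hlt
    push_cast
    linarith
  have hcover := bowenCoverNum_conjShift_le_mul (hh.mul (isTorusDiffeo_sineShear s M)) hε
    (n₁ := ⌊2 * (L * D : ℝ) / ε⌋₊ + 1) (n₂ := ⌊2 * (L : ℝ) / ε⌋₊ + 1) (Nat.succ_pos _)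
    (Nat.succ_pos _) (fun p p' hp₁ hp₂ => ?_) α m
  · calc (bowenCoverNum _ m ε : ℝ) ≤ _ := Nat.cast_le.2 hcover
      _ ≤ (2 * (L * D) + 1) / ε * ((2 * L + 1) / ε) := by
        rw [Nat.cast_mul]
        exact mul_le_mul (hfloor _ (by positivity)) (hfloor _ L.2) (by positivity) (by positivity)
      _ = _ := by rw [div_mul_div_comm, ← sq, coverBound, shearLip, NNReal.coe_mul]
  · calc dist (h (sineShear s M p)) (h (sineShear s M p'))
        ≤ L * dist (sineShear s M p) (sineShear s M p') := hL.dist_le_mul _ _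
      _ ≤ L * (D * |p.1 - p'.1| + |p.2 - p'.2|) := by
        gcongr
        exact dist_verticalShear_le (lipschitzWith_sine s M) p p'
      _ ≤ L * D * (1 / (⌊2 * (L * D : ℝ) / ε⌋₊ + 1 : ℕ)) +
          L * (1 / (⌊2 * (L : ℝ) / ε⌋₊ + 1 : ℕ)) := by
        rw [mul_add, ← mul_assoc]
        gcongr
      _ < ε := by linarith [hsmall (L * D), hsmall L]

lemma le_bowenCoverNum_conjShift_mul_sineShear {h : Equiv.Perm (ℝ × ℝ)} (hh : IsTorusDiffeo h)
    {e : ℝ} (hsep : SeparatesHalfTranslates h e) {L L' : ℝ≥0} (hL : LipschitzWith L h) {s : ℝ}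
    (hs : 0 < s) {q l N : ℕ} (hL' : LipschitzWith L' (h * sineShear s (q * l) : Equiv.Perm _))
    (hq : 0 < q) (hl : 0 < l) (hN : 0 < N) {α : ℝ} (hα : ∃ c : ℤ, q * α = c) {ε : ℝ}
    (hε : 0 < ε) (hεe : 2 * ε + 4 * L / (q * l : ℕ) + 2 * L' * (1 / N) ≤ e) :
    4 * s ≤ bowenCoverNum (toTorusMap (conjShift (h * sineShear s (q * l))
      (α + 1 / ((q * l : ℕ) * N)))) (q * l * N) ε := by
  have hM : 0 < q * l := Nat.mul_pos hq hl
  have hg := hh.mul (isTorusDiffeo_sineShear s (q * l))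
  set g := h * sineShear s (q * l)
  set β := α + 1 / ((q * l : ℕ) * N)
  set J := ⌊4 * s⌋₊ + 1
  let x : Fin J → ℝ := fun j => j / (8 * (q * l : ℕ) * s)
  have hseparated : ∀ j k : Fin J, k < j → ∃ i < q * l * N,
      2 * ε ≤ dist ((toTorusMap (conjShift g β))^[i] (torusProj (g (x j, 0))))
        ((toTorusMap (conjShift g β))^[i] (torusProj (g (x k, 0)))) := by
    intro j k hkj
    have hx : x j - x k = (j - k) / (8 * (q * l : ℕ) * s) := (sub_div _ _ _).symm
    have hge : (1 : ℝ) ≤ j - k := by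
      rw [le_sub_iff_add_le']
      exact_mod_cast hkj
    have hle : (j - k : ℝ) ≤ 4 * s := by
      have hj : (j : ℝ) ≤ ⌊4 * s⌋₊ := Nat.cast_le.2 (Nat.lt_succ_iff.1 j.2)
      linarith [Nat.floor_le (by positivity : 0 ≤ 4 * s), (k : ℕ).cast_nonneg (α := ℝ)]
    obtain ⟨t, ht⟩ := hsep.exists_le_dist_mul_sineShear hL hs hM (x₁ := x j) (x₂ := x k)
      (by rw [hx]; field_simp; linarith)
      (by rw [hx, abs_of_nonneg (by positivity)]; field_simp; linarith)
    obtain ⟨i, hi, hdist⟩ := exists_lt_forall_dist_conjShift hg.equivariant hL' hq hl hN hα t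
    refine ⟨i, hi, ?_⟩
    rw [toTorusMap_conjShift_iterate hg, toTorusMap_conjShift_iterate hg]
    linarith [hdist (x j) (x k)]
  have hcard := card_le_bowenCoverNum (ι := Fin J) (n := q * l * N)
    ((hg.conjShift β).equivariant.continuous_toTorusMap (hg.conjShift β).contDiff.continuous) hε
    (x := fun j => torusProj (g (x j, 0))) fun j k hjk => by
      rcases hjk.lt_or_gt with hlt | hgt
      · obtain ⟨i, hi, hdist⟩ := hseparated k j hlt
        exact ⟨i, hi, by rwa [dist_comm]⟩
      · exact hseparated j k hgt
  rw [Fintype.card_fin] at hcard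
  calc 4 * s ≤ J := by
        rw [Nat.cast_add, Nat.cast_one]
        exact (Nat.lt_floor_add_one _).le
    _ ≤ _ := Nat.cast_le.2 hcard

/-! ### The first coordinate of a twisted chart -/

/-- The points at distance more than `η` from the discontinuities of the two sawtooths occurring in
`(twist b Q)⁻¹`. -/
def regularSet (η : ℝ) (Q : ℕ) : Set Torus2 :=
  {z | η < ‖Q • z.1‖ ∧ η < ‖z.2 + Q • z.1‖}

lemma measurableSet_regularSet (η : ℝ) (Q : ℕ) : MeasurableSet (regularSet η Q) :=
  (isOpen_lt continuous_const (by fun_prop : Continuous fun z : Torus2 => ‖Q • z.1‖)).inter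
    (isOpen_lt continuous_const (by fun_prop : Continuous fun z : Torus2 => ‖z.2 + Q • z.1‖))
    |>.measurableSet

instance isProbabilityMeasure_volume_torus1 : IsProbabilityMeasure (volume : Measure Torus1) :=
  ⟨by rw [AddCircle.measure_univ, ENNReal.ofReal_one]⟩

lemma volume_setOf_norm_le {X : Type*} [MeasurableSpace X] {μ : Measure X} {f : X → Torus1}
    (hf : MeasurePreserving f μ volume) (η : ℝ) : μ {x | ‖f x‖ ≤ η} ≤ ENNReal.ofReal (2 * η) := by
  have hball : {x | ‖f x‖ ≤ η} = f ⁻¹' Metric.closedBall 0 η := by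
    ext x
    simp only [mem_ofPred_eq, mem_preimage, mem_closedBall_zero_iff]
  rw [hball, hf.measure_preimage Metric.isClosed_closedBall.measurableSet.nullMeasurableSet,
    AddCircle.volume_closedBall]
  exact ENNReal.ofReal_le_ofReal (min_le_right _ _)

lemma volume_compl_regularSet_le {η : ℝ} (hη : 0 ≤ η) {Q : ℕ} (hQ : 1 < Q) :
    volume (regularSet η Q)ᶜ ≤ ENNReal.ofReal (4 * η) := by
  have hfst : MeasurePreserving (fun z : Torus2 => Q • z.1) volume volume :=
    (AddCircle.ergodic_nsmul hQ).toMeasurePreserving.comp measurePreserving_fst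
  have hskew : MeasurePreserving (fun z : Torus2 => (z.1, z.2 + Q • z.1)) volume volume :=
    (MeasurePreserving.id _).skew_product
      (by fun_prop : Continuous fun z : Torus2 => z.2 + Q • z.1).measurable
      (Eventually.of_forall fun _ => map_add_right_eq_self volume _)
  have hsnd : MeasurePreserving (fun z : Torus2 => z.2 + Q • z.1) volume volume :=
    measurePreserving_snd.comp hskew
  have hcompl : (regularSet η Q)ᶜ = {z | ‖Q • z.1‖ ≤ η} ∪ {z | ‖z.2 + Q • z.1‖ ≤ η} := by
    ext z
    simp only [regularSet, mem_compl_iff, mem_ofPred_eq, not_and_or, not_lt, mem_union]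
  calc volume (regularSet η Q)ᶜ
    _ ≤ ENNReal.ofReal (2 * η) + ENNReal.ofReal (2 * η) := by
      rw [hcompl]
      exact (measure_union_le _ _).trans
        (add_le_add (volume_setOf_norm_le hfst η) (volume_setOf_norm_le hsnd η))
    _ = ENNReal.ofReal (4 * η) := by
      rw [← ENNReal.ofReal_add (by positivity) (by positivity)]
      ring_nf

lemma IsSmoothSawtooth.coe_apply {η : ℝ} {b : ℝ → ℝ} (hb : IsSmoothSawtooth η b) {x : ℝ}
    (hx : η ≤ ‖(x : Torus1)‖) : ((b x : ℝ) : Torus1) = x := by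
  have hfract : b x = Int.fract x := by
    rw [UnitAddCircle.norm_eq, abs_sub_round_eq_min, le_min_iff] at hx
    rw [← hb.apply_eq (Int.fract x) ⟨hx.1, by linarith [hx.2]⟩, ← Int.self_sub_floor,
      ← mul_one (⌊x⌋ : ℝ), hb.periodic.sub_int_mul_eq]
  rw [hfract, ← Int.self_sub_floor]
  exact addCircle_coe_eq_iff.2 ⟨⌊x⌋, by ring⟩

lemma nsmul_fst_twist_inv {η : ℝ} {b : ℝ → ℝ} (hb : IsSmoothSawtooth η b) {Q : ℕ} (hQ : 0 < Q)
    {w : ℝ × ℝ} (hw : torusProj w ∈ regularSet η Q) :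
    Q • ((((twist b Q)⁻¹ w).1 : ℝ) : Torus1) = -(w.2 : Torus1) := by
  have hQ' : (Q : ℝ) ≠ 0 := by positivity
  obtain ⟨hw₁, hw₂⟩ := hw
  have hinner : ((b (Q * w.1) : ℝ) : Torus1) = Q • (w.1 : Torus1) := by
    rw [hb.coe_apply, ← nsmul_eq_mul, AddCircle.coe_nsmul]
    rw [← nsmul_eq_mul, AddCircle.coe_nsmul]
    exact hw₁.le
  have houter : ((b (w.2 + b (Q * w.1)) : ℝ) : Torus1) = w.2 + Q • (w.1 : Torus1) := by
    rw [hb.coe_apply, AddCircle.coe_add, hinner]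
    rw [AddCircle.coe_add, hinner]
    exact hw₂.le
  rw [twist_inv_apply, ← AddCircle.coe_nsmul, nsmul_eq_mul, mul_sub, mul_div_cancel₀ _ hQ',
    AddCircle.coe_sub, houter, ← nsmul_eq_mul, AddCircle.coe_nsmul]
  abel

lemma abs_fst_twist_inv_sub_le {b : ℝ → ℝ} (hb : ∀ x, |b x| ≤ 1) (Q : ℕ) (w : ℝ × ℝ) :
    |((twist b Q)⁻¹ w).1 - w.1| ≤ 1 / Q := by
  rw [twist_inv_apply, sub_sub_cancel_left, abs_neg, abs_div, Nat.abs_cast]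
  gcongr
  exact hb _

lemma dist_torusProj_le_of_twist_inv {η : ℝ} {b : ℝ → ℝ} (hb : IsSmoothSawtooth η b) {Q : ℕ}
    (hQ : 0 < Q) {w w' : ℝ × ℝ} (hw : torusProj w ∈ regularSet η Q)
    (hw' : torusProj w' ∈ regularSet η Q) {θ : ℝ}
    (hθ : dist ((((twist b Q)⁻¹ w).1 : ℝ) : Torus1) (((twist b Q)⁻¹ w').1 : ℝ) ≤ θ) :
    dist (torusProj w) (torusProj w') ≤ Q * θ + 2 / Q := by
  have hθ₀ : 0 ≤ θ := dist_nonneg.trans hθ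
  have hQ₁ : (1 : ℝ) ≤ Q := by exact_mod_cast hQ
  refine max_le ?_ ?_
  · have hfst (v : ℝ × ℝ) : dist (v.1 : Torus1) (((twist b Q)⁻¹ v).1 : ℝ) ≤ 1 / Q := by
      rw [dist_comm]
      exact (dist_addCircle_coe_le _ _).trans (abs_fst_twist_inv_sub_le hb.abs_le_one Q v)
    have hw'fst := hfst w'
    rw [dist_comm] at hw'fst
    calc dist (w.1 : Torus1) w'.1
      _ ≤ 1 / Q + θ + 1 / Q := (dist_triangle4 _ _ _ _).trans (by gcongr; exact hfst w)
      _ = θ + 2 / Q := by ring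
      _ ≤ Q * θ + 2 / Q := by nlinarith
  · have hsnd : dist (w.2 : Torus1) w'.2 ≤ Q * θ := by
      rw [← neg_neg (w.2 : Torus1), ← neg_neg (w'.2 : Torus1), ← nsmul_fst_twist_inv hb hQ hw,
        ← nsmul_fst_twist_inv hb hQ hw', dist_neg_neg, dist_eq_norm, ← nsmul_sub]
      rw [dist_eq_norm] at hθ
      exact norm_nsmul_le.trans (by gcongr)
    exact hsnd.trans (le_add_of_nonneg_right (by positivity))

/-- On `A`, points whose first coordinates in the chart `h` are `θ`-close are themselves
`δ`-close. -/
def FstDetermines (h : Equiv.Perm (ℝ × ℝ)) (A : Set Torus2) (θ δ : ℝ) : Prop :=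
  ∀ p p', torusProj p ∈ A → torusProj p' ∈ A →
    dist ((h⁻¹ p).1 : Torus1) ((h⁻¹ p').1 : Torus1) ≤ θ → dist (torusProj p) (torusProj p') ≤ δ

lemma fstDetermines_mul_twist {h : Equiv.Perm (ℝ × ℝ)} (hh : IsTorusDiffeo h) {L : ℝ≥0}
    (hL : LipschitzWith L h) {η : ℝ} {b : ℝ → ℝ} (hb : IsSmoothSawtooth η b) {Q : ℕ} (hQ : 0 < Q)
    (θ : ℝ) : FstDetermines (h * twist b Q) (toTorusMap ⇑h⁻¹ ⁻¹' regularSet η Q) θ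
      (L * (Q * θ + 2 / Q)) := fun p p' hp hp' hθ => by
  rw [mem_preimage, hh.equivariant_inv.toTorusMap_torusProj] at hp hp'
  rw [mul_inv_rev, Equiv.Perm.mul_apply, Equiv.Perm.mul_apply] at hθ
  calc dist (torusProj p) (torusProj p')
    _ = dist (torusProj (h (h⁻¹ p))) (torusProj (h (h⁻¹ p'))) := by simp
    _ ≤ L * dist (torusProj (h⁻¹ p)) (torusProj (h⁻¹ p')) :=
      hh.equivariant.dist_torusProj_le hL _ _
    _ ≤ L * (Q * θ + 2 / Q) := by
      gcongr
      exact dist_torusProj_le_of_twist_inv hb hQ hp hp' hθ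

lemma exists_fstDetermines_mul_twist {h : Equiv.Perm (ℝ × ℝ)} (hh : IsTorusDiffeo h) {L : ℝ≥0}
    (hL : LipschitzWith L h) {η : ℝ} (hη : 0 ≤ η) {b : ℝ → ℝ} (hb : IsSmoothSawtooth η b) {Q : ℕ}
    (hQ : 1 < Q) : ∃ A, MeasurableSet A ∧ volume Aᶜ ≤ ENNReal.ofReal (4 * η) ∧
      ∀ θ, FstDetermines (h * twist b Q) A θ (L * (Q * θ + 2 / Q)) := by
  refine ⟨_, hh.inv.measurePreserving.measurable (measurableSet_regularSet η Q), ?_,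
    fstDetermines_mul_twist hh hL hb (zero_lt_one.trans hQ)⟩
  rw [← preimage_compl, hh.inv.measurePreserving.measure_preimage
    (measurableSet_regularSet η Q).compl.nullMeasurableSet]
  exact volume_compl_regularSet_le hη hQ

lemma exists_twist {h : Equiv.Perm (ℝ × ℝ)} (hh : IsTorusDiffeo h) {e₀ e : ℝ} (he : e₀ < e)
    (hsep : SeparatesHalfTranslates h e) {q : ℕ} (hq : 0 < q) {δ : ℝ} (hδ : 0 < δ) :
    ∃ g, IsTorusDiffeo g ∧ (∀ β : ℝ, (∃ c : ℤ, q * β = c) → Commute g (shift β)) ∧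
      (∃ e' > e₀, SeparatesHalfTranslates (h * g) e') ∧ (∀ w, |(g⁻¹ w).1 - w.1| ≤ δ) ∧
      ∃ A, MeasurableSet A ∧ volume Aᶜ ≤ ENNReal.ofReal δ ∧
        ∃ θ > 0, FstDetermines (h * g) A θ δ := by
  obtain ⟨L, hL⟩ := hh.exists_lipschitzWith
  have hη : 0 < min (δ / 4) (1 / 4) := by positivity
  obtain ⟨b, hb⟩ := exists_isSmoothSawtooth hη ((min_le_right _ _).trans_lt (by norm_num))
  have htendsto (C : ℝ) : Tendsto (fun l : ℕ => C / ((q * l : ℕ) : ℝ)) atTop (𝓝 0) :=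
    (tendsto_natCast_atTop_atTop.comp (tendsto_id.const_mul_atTop' hq)).const_div_atTop C
  obtain ⟨l, hδl, hel, hLl, hl⟩ := ((htendsto 1).eventually_le_const hδ |>.and <|
    (htendsto (4 * L)).eventually_lt_const (sub_pos.2 he) |>.and <|
    (htendsto (2 * L)).eventually_le_const (half_pos hδ) |>.and <|
    eventually_gt_atTop 1).exists
  set Q := q * l
  have hQ : 1 < Q := hl.trans_le (Nat.le_mul_of_pos_left l hq)
  obtain ⟨A, hA, hAvol, hdet⟩ := exists_fstDetermines_mul_twist hh hL hη.le hb hQ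
  refine ⟨twist b Q, isTorusDiffeo_twist hb.periodic hb.contDiff Q, fun β ⟨c, hc⟩ =>
    commute_twist_shift hb.periodic ⟨l * c, ?_⟩,
    ⟨_, by linarith, hsep.mul_twist hL hb (zero_lt_one.trans hQ)⟩,
    fun w => (abs_fst_twist_inv_sub_le hb.abs_le_one Q w).trans hδl, A, hA, hAvol.trans ?_,
    δ / (2 * (L + 1) * Q), by positivity, fun p p' hp hp' hθ =>
      (hdet _ p p' hp hp' hθ).trans ?_⟩
  · push_cast [Q]
    rw [← hc]
    ring
  · exact ENNReal.ofReal_le_ofReal (by linarith [min_le_left (δ / 4) (1 / 4)])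
  · have hθ : L * (Q * (δ / (2 * (L + 1) * Q))) ≤ δ / 2 := by
      field_simp
      linarith
    have hLQ : L * (2 / Q) = 2 * L / (Q : ℝ) := by ring
    linarith [mul_add (L : ℝ) (Q * (δ / (2 * (L + 1) * Q))) (2 / Q)]

/-! ### Asymptotics of the sine shears -/

section Asymptotics

open Asymptotics

variable {a : ℝ} (L : ℝ≥0) (M : ℕ)

lemma tendsto_natCast_rpow_nhds_zero {r : ℝ} (hr : r < 0) :
    Tendsto (fun N : ℕ => (N : ℝ) ^ r) atTop (𝓝 0) := by
  have h := (tendsto_rpow_neg_atTop (neg_pos.2 hr)).comp (tendsto_natCast_atTop_atTop (R := ℝ))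
  simpa only [neg_neg, Function.comp_def] using h

lemma natCast_rpow_div (a : ℝ) {N : ℕ} (hN : 0 < N) : (N : ℝ) ^ a / N = (N : ℝ) ^ (a - 1) := by
  rw [Real.rpow_sub (by exact_mod_cast hN), Real.rpow_one]

lemma isBigO_const_add_const_mul_rpow (ha : 0 ≤ a) (C D : ℝ) :
    (fun N : ℕ => C + D * (N : ℝ) ^ a) =O[atTop] fun N : ℕ => (N : ℝ) ^ a := by
  refine IsBigO.add ?_ (isBigO_const_mul_self D _ _)
  refine IsBigO.of_bound |C| ?_
  filter_upwards [eventually_ge_atTop 1] with N hN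
  have hone : 1 ≤ (N : ℝ) ^ a := Real.one_le_rpow (by exact_mod_cast hN) ha
  rw [Real.norm_eq_abs, Real.norm_eq_abs, abs_of_nonneg (zero_le_one.trans hone)]
  exact le_mul_of_one_le_right (abs_nonneg C) hone

lemma coe_shearLip_natCast_rpow (N : ℕ) :
    (shearLip L M ((N : ℝ≥0) ^ a) : ℝ) = L + L * (2 * Real.pi * M) * (N : ℝ) ^ a := by
  simp only [shearLip, NNReal.coe_mul, NNReal.coe_add, NNReal.coe_one, NNReal.coe_rpow,
    NNReal.coe_natCast, NNReal.coe_ofNat, NNReal.coe_real_pi]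
  ring

lemma isBigO_shearLip (ha : 0 ≤ a) :
    (fun N : ℕ => (shearLip L M ((N : ℝ≥0) ^ a) : ℝ)) =O[atTop] fun N : ℕ => (N : ℝ) ^ a := by
  simp only [coe_shearLip_natCast_rpow]
  exact isBigO_const_add_const_mul_rpow ha _ _

lemma isBigO_coverBound (ha : 0 ≤ a) :
    (fun N : ℕ => coverBound L M ((N : ℝ≥0) ^ a)) =O[atTop] fun N : ℕ => (N : ℝ) ^ a := by
  refine (isBigO_const_add_const_mul_rpow ha ((2 * L + 1) * (2 * L + 1))
    (2 * (L * (2 * Real.pi * M)) * (2 * L + 1))).congr_left fun N => ?_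
  rw [coverBound, coe_shearLip_natCast_rpow]
  ring

lemma isBigO_shearLip_div (ha : 0 ≤ a) :
    (fun N : ℕ => (shearLip L M ((N : ℝ≥0) ^ a) : ℝ) / (M * N)) =O[atTop]
      fun N : ℕ => (N : ℝ) ^ (a - 1) := by
  have hinv : (fun N : ℕ => ((M : ℝ) * N)⁻¹) =O[atTop] fun N : ℕ => (N : ℝ)⁻¹ := by
    simpa only [mul_inv] using isBigO_const_mul_self (M : ℝ)⁻¹ (fun N : ℕ => (N : ℝ)⁻¹) atTop
  refine ((isBigO_shearLip L M ha).mul hinv).congr' .rfl ?_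
  filter_upwards [eventually_gt_atTop 0] with N hN
  rw [← natCast_rpow_div a hN, div_eq_mul_inv]

lemma tendsto_shearLip_div (ha : 0 ≤ a) (ha₁ : a < 1) :
    Tendsto (fun N : ℕ => (shearLip L M ((N : ℝ≥0) ^ a) : ℝ) / (M * N)) atTop (𝓝 0) :=
  (isBigO_shearLip_div L M ha).trans_tendsto (tendsto_natCast_rpow_nhds_zero (by linarith))

lemma tendsto_coverBound_mul_shearLip_div_rpow (ha : 0 ≤ a) {d : ℝ} (hd : 0 ≤ d)
    (had : a < (1 - a) * d) :
    Tendsto (fun N : ℕ => coverBound L M ((N : ℝ≥0) ^ a) *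
      ((shearLip L M ((N : ℝ≥0) ^ a) : ℝ) / (M * N)) ^ d) atTop (𝓝 0) := by
  have hrpow := (isBigO_shearLip_div L M ha).rpow hd
    (Eventually.of_forall fun N : ℕ => Real.rpow_nonneg N.cast_nonneg _)
  refine ((isBigO_coverBound L M ha).mul hrpow).trans_tendsto <|
    (tendsto_natCast_rpow_nhds_zero (r := a - (1 - a) * d) (by linarith)).congr' ?_
  filter_upwards [eventually_gt_atTop 0] with N hN
  have hN' : (0 : ℝ) < N := by exact_mod_cast hN
  rw [← Real.rpow_mul hN'.le, ← Real.rpow_add hN']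
  ring_nf

lemma eventually_mul_rpow_le {c : ℝ} (hca : c < a) :
    ∀ᶠ N : ℕ in atTop, ((M : ℝ) * N) ^ c ≤ 4 * (N : ℝ) ^ a := by
  have h := (tendsto_natCast_rpow_nhds_zero (sub_neg.2 hca)).const_mul ((M : ℝ) ^ c)
  rw [mul_zero] at h
  filter_upwards [h.eventually_le_const four_pos, eventually_gt_atTop 0] with N hle hN
  have hN' : (0 : ℝ) < N := by exact_mod_cast hN
  rwa [Real.rpow_sub hN', ← mul_div_assoc, div_le_iff₀ (by positivity),
    ← Real.mul_rpow M.cast_nonneg hN'.le] at hle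

end Asymptotics

/-! ### Stages of the approximation by conjugation -/

/-- A stage of the construction: the chart conjugating the map to the horizontal rotation by
`angle`, a common denominator `den` of the angle, the distance `drift` by which the map may move
away from the map of the previous stage at each iteration, the constant `cover` in the upper bound
for its Bowen covering numbers, and the tolerance `tol` for the changes made at the next stage. -/
structure Stage where
  chart : Equiv.Perm (ℝ × ℝ)
  angle : ℝ
  den : ℕ
  drift : ℝ
  cover : ℝ
  tol : ℝ

namespace Stage

/-- The lift of the torus map of a stage. -/
noncomputable def lift (s : Stage) : Equiv.Perm (ℝ × ℝ) := conjShift s.chart s.angle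

/-- The torus map of a stage. -/
noncomputable def map (s : Stage) : Torus2 → Torus2 := toTorusMap s.lift

/-- The conditions under which a stage has a successor. -/
structure IsAdmissible (s : Stage) : Prop where
  isTorusDiffeo : IsTorusDiffeo s.chart
  den_pos : 0 < s.den
  exists_den_mul_angle_eq : ∃ c : ℤ, s.den * s.angle = c
  tol_pos : 0 < s.tol
  separates : ∃ e > 1 / 4, SeparatesHalfTranslates s.chart e

/-- The `n`-th stage `s` is so close to the map with lift `F`, conjugate to the rotation by `α`,
that a sequence of such approximations, each with the tolerance `θ` of the previous stage,
converges to a smooth diffeomorphism. -/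
structure Approximates (s : Stage) (n : ℕ) (F : Equiv.Perm (ℝ × ℝ)) (α θ : ℝ) : Prop where
  crClose : CrClose n ((1 / 2) ^ n) s.lift F
  crClose_inv : CrClose n ((1 / 2) ^ n) ⇑s.lift⁻¹ ⇑F⁻¹
  dist_iterate_le : ∀ (i : ℕ) (p : ℝ × ℝ), dist (s.lift^[i] p) (F^[i] p) ≤ i * s.drift
  drift_pos : 0 < s.drift
  drift_le : s.drift ≤ θ
  lt_angle : α < s.angle
  angle_sub_le : s.angle - α ≤ θ
  tol_le : s.tol ≤ θ / 2
  tol_le_drift : s.tol ≤ s.drift / 2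
  tol_mul_den_le : s.tol * s.den ≤ (1 / 2) ^ n

/-- The growth of the orbits of the `n`-th stage: at time `den` their number is at least `den ^ c`,
and at all times it is small compared to `drift ^ (-d)`. -/
structure HasGrowth (s : Stage) (c d : ℝ) (n : ℕ) : Prop where
  le_den : n ≤ s.den
  rpow_le_bowenCoverNum : (s.den : ℝ) ^ c ≤ bowenCoverNum s.map s.den (1 / 8)
  bowenCoverNum_le : ∀ ε, 0 < ε → ε ≤ 1 → ∀ m, bowenCoverNum s.map m ε ≤ s.cover / ε ^ 2
  cover_mul_rpow_le : s.cover * s.drift ^ d ≤ (1 / 2) ^ n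

/-- The relation between the consecutive stages `n` and `n + 1`. -/
structure IsSuccessor (s' s : Stage) (c d : ℝ) (n : ℕ) : Prop extends
    s'.Approximates n s.lift s.angle s.tol, s'.HasGrowth c d n where
  abs_fst_inv_sub_le : ∀ p, |(s'.chart⁻¹ p).1 - (s.chart⁻¹ p).1| ≤ s.tol
  exists_fstDetermines : ∃ A, MeasurableSet A ∧ volume Aᶜ ≤ ENNReal.ofReal ((1 / 2) ^ n) ∧
    FstDetermines s'.chart A (4 * s'.tol) ((1 / 2) ^ n)

end Stage

/-- The stage obtained from the rotation by `α` in the `L`-Lipschitz chart `k` by a sine shear of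
frequency `M` and amplitude `N ^ a`, the rotation number increasing by `1 / (M * N)`. -/
noncomputable def shearStage (k : Equiv.Perm (ℝ × ℝ)) (L : ℝ≥0) (α a θ : ℝ) (n M N : ℕ) :
    Stage where
  chart := k * sineShear ((N : ℝ≥0) ^ a : ℝ≥0) M
  angle := α + 1 / (M * N)
  den := M * N
  drift := shearLip L M ((N : ℝ≥0) ^ a) / (M * N)
  cover := coverBound L M ((N : ℝ≥0) ^ a)
  tol := min (θ / 2) (min (shearLip L M ((N : ℝ≥0) ^ a) / (M * N) / 2) ((1 / 2) ^ n / (M * N)))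

section shearStage

variable {k : Equiv.Perm (ℝ × ℝ)} {L : ℝ≥0} {q M : ℕ} {α a θ : ℝ}

lemma fst_inv_shearStage_chart (k : Equiv.Perm (ℝ × ℝ)) (L : ℝ≥0) (α a θ : ℝ) (n M N : ℕ)
    (p : ℝ × ℝ) : ((shearStage k L α a θ n M N).chart⁻¹ p).1 = (k⁻¹ p).1 := by
  rw [shearStage, mul_inv_rev, Equiv.Perm.mul_apply, sineShear, verticalShear_inv_apply]

lemma exists_mul_eq_of_dvd (hα : ∃ c : ℤ, q * α = c) (hqM : q ∣ M) : ∃ c : ℤ, M * α = c := by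
  obtain ⟨l, rfl⟩ := hqM
  obtain ⟨c, hc⟩ := hα
  refine ⟨l * c, ?_⟩
  push_cast
  rw [← hc]
  ring

lemma shearLip_pos (hL : 0 < L) (M : ℕ) (s : ℝ≥0) : 0 < shearLip L M s :=
  mul_pos hL (add_pos_of_pos_of_nonneg one_pos zero_le)

lemma tendsto_one_div_natCast_mul (M : ℕ) :
    Tendsto (fun N : ℕ => 1 / ((M : ℝ) * N)) atTop (𝓝 0) := by
  simpa only [one_div_mul_one_div, mul_zero] using
    tendsto_one_div_atTop_nhds_zero_nat.const_mul (1 / (M : ℝ))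

lemma tendsto_natCast_rpow_mul_one_div (M : ℕ) (ha : a < 1) :
    Tendsto (fun N : ℕ => (((N : ℝ≥0) ^ a : ℝ≥0) : ℝ) * (1 / ((M : ℝ) * N))) atTop (𝓝 0) := by
  have h := (tendsto_natCast_rpow_nhds_zero (sub_neg.2 ha)).const_mul (1 / (M : ℝ))
  rw [mul_zero] at h
  refine h.congr' ?_
  filter_upwards [eventually_gt_atTop 0] with N hN
  rw [← natCast_rpow_div a hN, NNReal.coe_rpow, NNReal.coe_natCast]
  field_simp

lemma eventually_crClose_shearStage (hk : IsTorusDiffeo k) (hα : ∃ c : ℤ, M * α = c)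
    (ha : a < 1) (n : ℕ) : ∀ᶠ N in atTop,
      CrClose n ((1 / 2) ^ n) (shearStage k L α a θ n M N).lift (conjShift k α) ∧
        CrClose n ((1 / 2) ^ n) ⇑(shearStage k L α a θ n M N).lift⁻¹ ⇑(conjShift k α)⁻¹ := by
  have ht := tendsto_one_div_natCast_mul M
  have hst := tendsto_natCast_rpow_mul_one_div M ha
  have hpos : (0 : ℝ) < (1 / 2) ^ n := by positivity
  have hα' : ∃ c : ℤ, M * -α = c := hα.imp' Neg.neg fun c hc => by push_cast; rw [← hc, mul_neg]
  have hclose := eventually_crClose_conjShift_mul_sineShear hk hα ht hst n hpos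
  have hclose' := eventually_crClose_conjShift_mul_sineShear hk hα' (neg_zero (G := ℝ) ▸ ht.neg)
    (by simpa only [mul_neg, neg_zero] using hst.neg) n hpos
  filter_upwards [hclose, hclose'] with N h h'
  refine ⟨h, ?_⟩
  rwa [Stage.lift, conjShift_inv, conjShift_inv, shearStage, neg_add]

lemma dist_shearStage_lift_iterate_le (hL : LipschitzWith L k) (hα : ∃ c : ℤ, M * α = c)
    (n N i : ℕ) (p : ℝ × ℝ) : dist ((shearStage k L α a θ n M N).lift^[i] p)
      ((conjShift k α)^[i] p) ≤ i * (shearStage k L α a θ n M N).drift := by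
  have hiα : ∃ c : ℤ, M * (i * α) = c := by
    obtain ⟨c, hc⟩ := hα
    exact ⟨i * c, by push_cast; rw [← hc]; ring⟩
  rw [Stage.lift, conjShift_iterate, conjShift_iterate, shearStage, mul_add]
  refine (dist_conjShift_mul_add_le (commute_sineShear_shift _ hiα)
    (lipschitzWith_mul_sineShear hL _ M) _ p).trans_eq ?_
  rw [abs_of_nonneg (by positivity)]
  ring

lemma eventually_approximates_shearStage (hk : IsTorusDiffeo k) (hL : LipschitzWith L k)
    (hL₀ : 0 < L) (hM : 0 < M) (hα : ∃ c : ℤ, M * α = c) (ha : 0 ≤ a) (ha₁ : a < 1) (hθ : 0 < θ)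
    (n : ℕ) :
    ∀ᶠ N in atTop, (shearStage k L α a θ n M N).Approximates n (conjShift k α) α θ := by
  filter_upwards [eventually_crClose_shearStage hk hα ha₁ n,
    (tendsto_shearLip_div L M ha ha₁).eventually_le_const hθ,
    (tendsto_one_div_natCast_mul M).eventually_le_const hθ, eventually_gt_atTop 0]
    with N hclose hdrift hangle hN
  have hMN : (0 : ℝ) < M * N := by positivity
  exact
    { crClose := hclose.1
      crClose_inv := hclose.2
      dist_iterate_le := dist_shearStage_lift_iterate_le hL hα n N
      drift_pos := div_pos (shearLip_pos hL₀ M _) hMN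
      drift_le := hdrift
      lt_angle := lt_add_of_pos_right α (one_div_pos.2 hMN)
      angle_sub_le := by rwa [shearStage, add_sub_cancel_left]
      tol_le := min_le_left _ _
      tol_le_drift := (min_le_right _ _).trans (min_le_left _ _)
      tol_mul_den_le := by
        rw [shearStage, Nat.cast_mul, ← le_div_iff₀ hMN]
        exact (min_le_right _ _).trans (min_le_right _ _) }

lemma eventually_hasGrowth_shearStage (hk : IsTorusDiffeo k) (hL : LipschitzWith L k) {e : ℝ}
    (hsep : SeparatesHalfTranslates k e) (hq : 0 < q) (hα : ∃ c : ℤ, q * α = c) (hM : 0 < M)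
    (hqM : q ∣ M) (he : 1 / 4 + 4 * L / (M : ℝ) < e) {c d : ℝ} (ha : 0 ≤ a) (ha₁ : a < 1)
    (hca : c < a) (hd : 0 ≤ d) (had : a < (1 - a) * d) (n : ℕ) :
    ∀ᶠ N in atTop, (shearStage k L α a θ n M N).HasGrowth c d n := by
  have hgap : 0 < (e - (1 / 4 + 4 * L / (M : ℝ))) / (2 * M) := by
    have := sub_pos.2 he
    positivity
  filter_upwards [(tendsto_shearLip_div L M ha ha₁).eventually_le_const hgap,
    (tendsto_coverBound_mul_shearLip_div_rpow L M ha hd had).eventually_le_const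
      (by positivity : (0 : ℝ) < (1 / 2) ^ n),
    eventually_mul_rpow_le M hca, eventually_ge_atTop n, eventually_gt_atTop 0]
    with N hlip hcover hpow hnN hN
  obtain ⟨l, rfl⟩ := hqM
  have hl : 0 < l := Nat.pos_of_mul_pos_left hM
  refine ⟨hnN.trans (Nat.le_mul_of_pos_left N hM), ?_, fun ε hε hε₁ m =>
    bowenCoverNum_conjShift_mul_sineShear_le hk hL _ _ hε hε₁ _ m, hcover⟩
  have hbudget : 2 * (1 / 8) + 4 * L / ((q * l : ℕ) : ℝ) +
      2 * (shearLip L (q * l) ((N : ℝ≥0) ^ a) : ℝ) * (1 / N) ≤ e := by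
    have hM' : (0 : ℝ) < (q * l : ℕ) := by exact_mod_cast hM
    have hscale (x : ℝ) : 2 * x * (1 / N) = x / ((q * l : ℕ) * N) * (2 * (q * l : ℕ)) := by
      field_simp
    rw [le_div_iff₀ (by positivity), ← hscale] at hlip
    linarith
  have hcount := le_bowenCoverNum_conjShift_mul_sineShear hk hsep hL (s := ((N : ℝ≥0) ^ a : ℝ≥0))
    (by positivity) (lipschitzWith_mul_sineShear hL _ _) hq hl hN hα (by norm_num) hbudget
  calc ((shearStage k L α a θ n (q * l) N).den : ℝ) ^ c
    _ = (((q * l : ℕ) : ℝ) * N) ^ c := by rw [shearStage, Nat.cast_mul (q * l)]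
    _ ≤ 4 * (N : ℝ) ^ a := hpow
    _ = 4 * (((N : ℝ≥0) ^ a : ℝ≥0) : ℝ) := by rw [NNReal.coe_rpow, NNReal.coe_natCast]
    _ ≤ _ := hcount

lemma isAdmissible_shearStage (hk : IsTorusDiffeo k) (hL : LipschitzWith L k) (hL₀ : 0 < L) {e : ℝ}
    (hsep : SeparatesHalfTranslates k e) (hM : 0 < M) (hα : ∃ c : ℤ, M * α = c)
    (he : 1 / 4 + 4 * L / (M : ℝ) < e) (hθ : 0 < θ) (n : ℕ) {N : ℕ} (hN : 0 < N) :
    (shearStage k L α a θ n M N).IsAdmissible where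
  isTorusDiffeo := hk.mul (isTorusDiffeo_sineShear _ M)
  den_pos := Nat.mul_pos hM hN
  exists_den_mul_angle_eq := by
    obtain ⟨c, hc⟩ := hα
    refine ⟨N * c + 1, ?_⟩
    have hMN : (M : ℝ) * N ≠ 0 := by positivity
    simp only [shearStage]
    push_cast
    rw [mul_add, mul_one_div_cancel hMN, ← hc]
    ring
  tol_pos := by
    have := shearLip_pos hL₀ M ((N : ℝ≥0) ^ a)
    simp only [shearStage]
    positivity
  separates := by
    refine ⟨_, ?_, hsep.mul_sineShear hL _ hM⟩
    have : 2 * L / (M : ℝ) ≤ 4 * L / (M : ℝ) := by gcongr; norm_num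
    linarith

end shearStage

namespace Stage

variable {s : Stage}

lemma Approximates.mono {n : ℕ} {F : Equiv.Perm (ℝ × ℝ)} {α θ θ' : ℝ}
    (h : s.Approximates n F α θ) (hθ : θ ≤ θ') : s.Approximates n F α θ' :=
  { h with
    drift_le := h.drift_le.trans hθ
    angle_sub_le := h.angle_sub_le.trans hθ
    tol_le := h.tol_le.trans (by linarith) }

lemma IsAdmissible.exists_isSuccessor (hs : s.IsAdmissible) {a c d : ℝ} (ha : 0 ≤ a) (ha₁ : a < 1)
    (hca : c < a) (hd : 0 ≤ d) (had : a < (1 - a) * d) (n : ℕ) :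
    ∃ s' : Stage, s'.IsAdmissible ∧ s'.IsSuccessor s c d n := by
  obtain ⟨e, he, hsep⟩ := hs.separates
  have hpow : (0 : ℝ) < (1 / 2) ^ n := by positivity
  obtain ⟨g, hg, hcomm, ⟨e', he', hsep'⟩, hfst, A, hA, hAvol, θ, hθ, hdet⟩ :=
    exists_twist hs.isTorusDiffeo he hsep hs.den_pos (lt_min hs.tol_pos hpow)
  set k := s.chart * g with hk_def
  have hk : IsTorusDiffeo k := hs.isTorusDiffeo.mul hg
  have hlift : conjShift k s.angle = s.lift :=
    conjShift_mul_of_commute (hcomm _ hs.exists_den_mul_angle_eq)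
  obtain ⟨L, hL⟩ := hk.exists_lipschitzWith
  have hL' := hL.weaken (le_add_of_nonneg_right zero_le_one)
  have hM_tendsto : Tendsto (fun l : ℕ => 4 * (L + 1 : ℝ≥0) / ((s.den * l : ℕ) : ℝ)) atTop (𝓝 0) :=
    (tendsto_natCast_atTop_atTop.comp (tendsto_id.const_mul_atTop' hs.den_pos)).const_div_atTop _
  obtain ⟨l, hl, hl₀⟩ := ((hM_tendsto.eventually_lt_const (sub_pos.2 he')).and
    (eventually_gt_atTop 0)).exists
  have hM : 0 < s.den * l := Nat.mul_pos hs.den_pos hl₀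
  have hMα := exists_mul_eq_of_dvd hs.exists_den_mul_angle_eq (dvd_mul_right s.den l)
  have hgap := lt_sub_iff_add_lt'.1 hl
  have hθ' : 0 < min s.tol (θ / 2) := lt_min hs.tol_pos (half_pos hθ)
  obtain ⟨N, happrox, hgrowth, hN⟩ :=
    ((eventually_approximates_shearStage hk hL' (by positivity) hM hMα ha ha₁ hθ' n).and <|
    (eventually_hasGrowth_shearStage hk hL' hsep' hs.den_pos hs.exists_den_mul_angle_eq hM
      (dvd_mul_right _ l) hgap ha ha₁ hca hd had n).and <| eventually_gt_atTop 0).exists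
  rw [hlift] at happrox
  refine ⟨_, isAdmissible_shearStage hk hL' (by positivity) hsep' hM hMα hgap hθ' n hN,
    ⟨happrox.mono (min_le_left _ _), hgrowth, fun p => ?_, A, hA,
      hAvol.trans (ENNReal.ofReal_le_ofReal (min_le_right _ _)), fun p p' hp hp' hpp' => ?_⟩⟩
  · rw [fst_inv_shearStage_chart, hk_def, mul_inv_rev, Equiv.Perm.mul_apply]
    exact (hfst _).trans (min_le_left _ _)
  · rw [fst_inv_shearStage_chart, fst_inv_shearStage_chart] at hpp'
    have htol := happrox.tol_le.trans (div_le_div_of_nonneg_right (min_le_right _ _) two_pos.le)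
    exact (hdet p p' hp hp' (hpp'.trans (by linarith))).trans (min_le_right _ _)

end Stage

/-! ### Limits of the stages -/

lemma tendsto_half_pow_nhds_zero : Tendsto (fun n : ℕ => (1 / 2 : ℝ) ^ n) atTop (𝓝 0) :=
  tendsto_pow_atTop_nhds_zero_of_lt_one (by norm_num) (by norm_num)

section Halving

variable {X : Type*} [PseudoMetricSpace X] {u : ℕ → X} {θ : ℕ → ℝ} {C : ℝ}

lemma le_div_two_pow_of_le_half (hθ : ∀ n, θ (n + 1) ≤ θ n / 2) (n k : ℕ) :
    θ (n + k) ≤ θ n / 2 ^ k := by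
  induction k with
  | zero => simp
  | succ k ih =>
    rw [pow_succ, ← div_div]
    exact (hθ (n + k)).trans (by gcongr)

lemma tendsto_zero_of_le_half (hθ₀ : ∀ n, 0 ≤ θ n) (hθ : ∀ n, θ (n + 1) ≤ θ n / 2) :
    Tendsto θ atTop (𝓝 0) := by
  refine squeeze_zero hθ₀ (fun n => ?_) (mul_zero (θ 0) ▸ tendsto_half_pow_nhds_zero.const_mul _)
  simpa only [zero_add, one_div, inv_pow, ← div_eq_mul_inv] using le_div_two_pow_of_le_half hθ 0 n

lemma dist_add_le_of_le_half (hθ : ∀ n, θ (n + 1) ≤ θ n / 2) (hC : 0 ≤ C)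
    (hu : ∀ n, dist (u n) (u (n + 1)) ≤ C * θ n) (n k : ℕ) :
    dist (u (n + k)) (u (n + (k + 1))) ≤ 2 * (C * θ n) / 2 / 2 ^ k := by
  rw [mul_div_cancel_left₀ _ two_ne_zero, mul_div_assoc]
  exact (hu (n + k)).trans (by gcongr; exact le_div_two_pow_of_le_half hθ n k)

lemma cauchySeq_of_dist_le_half (hθ : ∀ n, θ (n + 1) ≤ θ n / 2) (hC : 0 ≤ C)
    (hu : ∀ n, dist (u n) (u (n + 1)) ≤ C * θ n) : CauchySeq u :=
  cauchySeq_of_le_geometric_two fun k => by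
    simpa only [zero_add] using dist_add_le_of_le_half hθ hC hu 0 k

lemma dist_le_of_dist_le_half_of_tendsto (hθ : ∀ n, θ (n + 1) ≤ θ n / 2) (hC : 0 ≤ C)
    (hu : ∀ n, dist (u n) (u (n + 1)) ≤ C * θ n) {l : X} (hl : Tendsto u atTop (𝓝 l)) (n : ℕ) :
    dist (u n) l ≤ 2 * (C * θ n) :=
  dist_le_of_le_geometric_two_of_tendsto₀ (dist_add_le_of_le_half hθ hC hu n)
    (hl.comp (tendsto_add_atTop_nat n) |>.congr fun k => by rw [Function.comp_apply, add_comm])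

end Halving

lemma irrational_of_tendsto_mul_sub {x : ℝ} {q : ℕ → ℕ} {p : ℕ → ℤ} (hne : ∀ n, q n * x ≠ p n)
    (hlim : Tendsto (fun n => q n * x - p n) atTop (𝓝 0)) : Irrational x := by
  rintro ⟨r, rfl⟩
  have hden : (0 : ℝ) < r.den := mod_cast r.den_pos
  have hint : ∀ n, (r.den : ℝ) * (q n * r - p n) = (q n * r.num - r.den * p n : ℤ) := fun n => by
    have hr : (r : ℝ) * r.den = r.num := mod_cast r.mul_den_eq_num
    push_cast
    rw [← hr]
    ring
  have hge : ∀ n, 1 ≤ |(r.den : ℝ) * (q n * r - p n)| := fun n => by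
    have h := mul_ne_zero hden.ne' (sub_ne_zero.2 (hne n))
    rw [hint] at h ⊢
    exact mod_cast Int.one_le_abs (Int.cast_ne_zero.1 h)
  have hle := ge_of_tendsto' (hlim.const_mul (r.den : ℝ)).abs hge
  norm_num at hle

lemma exists_contDiff_tendstoUniformly {V W : Type*} [NormedAddCommGroup V] [NormedSpace ℝ V]
    [NormedAddCommGroup W] [NormedSpace ℝ W] [CompleteSpace W] {f : ℕ → V → W}
    (hf : ∀ n, ContDiff ℝ (⊤ : ℕ∞) (f n))
    (hclose : ∀ n, CrClose n ((1 / 2) ^ n) (f (n + 1)) (f n)) :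
    ∃ F, ContDiff ℝ (⊤ : ℕ∞) F ∧ TendstoUniformly f F atTop := by
  have hnorm : ∀ n x, ‖f (n + 1) x - f n x‖ ≤ (1 / 2) ^ n := fun n x => by
    simpa only [norm_iteratedFDeriv_zero] using hclose n 0 n.zero_le x
  have hsmooth : ContDiff ℝ (⊤ : ℕ∞) fun x => ∑' n, (f (n + 1) x - f n x) := by
    refine contDiff_tsum_of_eventually (v := fun _ n => (1 / 2) ^ n)
      (fun n => (hf (n + 1)).sub (hf n)) (fun _ _ => summable_geometric_two) fun k _ => ?_
    rw [Nat.cofinite_eq_atTop]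
    filter_upwards [eventually_ge_atTop k] with n hn x using hclose n k hn x
  refine ⟨fun x => f 0 x + ∑' n, (f (n + 1) x - f n x), (hf 0).add hsmooth, ?_⟩
  have hsum := tendstoUniformly_tsum_nat summable_geometric_two hnorm
  rw [Metric.tendstoUniformly_iff] at hsum ⊢
  refine fun ε hε => (hsum ε hε).mono fun n hn x => ?_
  have h := hn x
  rwa [Finset.sum_range_sub (fun n => f n x), ← dist_add_left (f 0 x), add_sub_cancel] at h

lemma measurePreserving_of_tendsto {X Y : Type*} [MeasurableSpace X] {μ : Measure X}
    [IsFiniteMeasure μ] [TopologicalSpace Y] [HasOuterApproxClosed Y] [MeasurableSpace Y]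
    [BorelSpace Y] {ν : Measure Y} {f : ℕ → X → Y} {F : X → Y}
    (hf : ∀ n, MeasurePreserving (f n) μ ν) (hF : Measurable F)
    (hlim : ∀ x, Tendsto (fun n => f n x) atTop (𝓝 (F x))) : MeasurePreserving F μ ν := by
  have : IsFiniteMeasure ν := (hf 0).map_eq ▸ inferInstance
  refine ⟨hF, ext_of_forall_integral_eq_of_IsFiniteMeasure fun g => ?_⟩
  have hg : Measurable g := g.continuous.measurable
  rw [integral_map hF.aemeasurable hg.aestronglyMeasurable]
  have hintegral : Tendsto (fun n => ∫ x, g (f n x) ∂μ) atTop (𝓝 (∫ x, g (F x) ∂μ)) :=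
    tendsto_integral_of_dominated_convergence (fun _ => ‖g‖)
      (fun n => (hg.comp (hf n).measurable).aestronglyMeasurable) (integrable_const _)
      (fun n => Eventually.of_forall fun x => g.norm_coe_le_norm _)
      (Eventually.of_forall fun x => (g.continuous.tendsto _).comp (hlim x))
  refine tendsto_nhds_unique hintegral (tendsto_const_nhds.congr fun n => ?_)
  rw [← (hf n).map_eq, integral_map (hf n).measurable.aemeasurable hg.aestronglyMeasurable]

lemma tendsto_iterate_of_tendstoUniformly {X : Type*} [UniformSpace X] {f : ℕ → X → X} {F : X → X}
    (hlim : TendstoUniformly f F atTop) (hF : Continuous F) (i : ℕ) (x : X) :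
    Tendsto (fun n => (f n)^[i] x) atTop (𝓝 (F^[i] x)) := by
  induction i with
  | zero => exact tendsto_const_nhds
  | succ i ih =>
    simp only [Function.iterate_succ_apply']
    exact hlim.tendsto_comp hF.continuousAt ih

lemma IsIntEquivariant.of_tendsto {f : ℕ → ℝ × ℝ → ℝ × ℝ} {F : ℝ × ℝ → ℝ × ℝ}
    (hf : ∀ n, IsIntEquivariant (f n)) (hlim : ∀ p, Tendsto (fun n => f n p) atTop (𝓝 (F p))) :
    IsIntEquivariant F := fun p a b =>
  tendsto_nhds_unique (hlim _) (((hlim p).add_const _).congr fun n => (hf n p a b).symm)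

lemma tendsto_toTorusMap {f : ℕ → ℝ × ℝ → ℝ × ℝ} {F : ℝ × ℝ → ℝ × ℝ}
    (hf : ∀ n, IsIntEquivariant (f n)) (hF : IsIntEquivariant F)
    (hlim : ∀ p, Tendsto (fun n => f n p) atTop (𝓝 (F p))) (x : Torus2) :
    Tendsto (fun n => toTorusMap (f n) x) atTop (𝓝 (toTorusMap F x)) := by
  obtain ⟨p, rfl⟩ := isOpenQuotientMap_torusProj.surjective x
  simp only [hF.toTorusMap_torusProj, fun n => (hf n).toTorusMap_torusProj]
  exact (lipschitzWith_torusProj.continuous.tendsto _).comp (hlim p)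

lemma exists_isTorusDiffeo_tendstoUniformly {f : ℕ → Equiv.Perm (ℝ × ℝ)}
    (hf : ∀ n, IsTorusDiffeo (f n)) (hclose : ∀ n, CrClose n ((1 / 2) ^ n) (f (n + 1)) (f n))
    (hclose_inv : ∀ n, CrClose n ((1 / 2) ^ n) ⇑(f (n + 1))⁻¹ ⇑(f n)⁻¹) :
    ∃ F, IsTorusDiffeo F ∧ TendstoUniformly (fun n => ⇑(f n)) F atTop := by
  obtain ⟨F, hF, hlim⟩ := exists_contDiff_tendstoUniformly (fun n => (hf n).contDiff) hclose
  obtain ⟨G, hG, hlim_inv⟩ :=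
    exists_contDiff_tendstoUniformly (f := fun n => ⇑(f n)⁻¹) (fun n => (hf n).contDiff_inv)
      hclose_inv
  have hGF : Function.LeftInverse G F := fun p =>
    tendsto_nhds_unique (hlim_inv.tendsto_comp hG.continuous.continuousAt (hlim.tendsto_at p))
      (tendsto_const_nhds.congr fun n => ((f n).symm_apply_apply p).symm)
  have hFG : Function.RightInverse G F := fun p =>
    tendsto_nhds_unique (hlim.tendsto_comp hF.continuous.continuousAt (hlim_inv.tendsto_at p))
      (tendsto_const_nhds.congr fun n => ((f n).apply_symm_apply p).symm)
  have hequiv : IsIntEquivariant F := .of_tendsto (fun n => (hf n).equivariant) hlim.tendsto_at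
  refine ⟨⟨F, G, hGF, hFG⟩, ⟨hF, hG, hequiv, ?_⟩, hlim⟩
  exact measurePreserving_of_tendsto (fun n => (hf n).measurePreserving)
    (hequiv.continuous_toTorusMap hF.continuous).measurable
    (tendsto_toTorusMap (fun n => (hf n).equivariant) hequiv hlim.tendsto_at)

lemma IsTorusDiffeo.isCkTorusDiffeo {F : Equiv.Perm (ℝ × ℝ)} (hF : IsTorusDiffeo F) :
    IsCkTorusDiffeo ⊤ (toTorusMap F) := by
  have hleft : Function.LeftInverse (toTorusMap ⇑F⁻¹) (toTorusMap F) :=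
    hF.leftInverse_toTorusMap_inv
  have hright : Function.LeftInverse (toTorusMap F) (toTorusMap ⇑F⁻¹) := by
    simpa only [inv_inv] using hF.inv.leftInverse_toTorusMap_inv
  refine ⟨⟨hleft.injective, hright.surjective⟩,
    ⟨F, hF.contDiff, hF.equivariant.isLiftOf_toTorusMap⟩, ⇑F⁻¹, hF.contDiff_inv, ?_⟩
  rw [Function.invFun_eq_of_injective_of_rightInverse hleft.injective hright]
  exact hF.equivariant_inv.isLiftOf_toTorusMap

/-! ### Sequences of stages -/

namespace Stage

/-- The first coordinate in the chart of a stage, seen as a map from the torus to the circle; it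
semiconjugates the torus map of the stage to the rotation by its angle. -/
noncomputable def factor (s : Stage) (x : Torus2) : Torus1 := (toTorusMap ⇑s.chart⁻¹ x).1

/-- A sequence of admissible stages, each of which is a successor of the previous one. -/
structure IsSequence (s : ℕ → Stage) (c d : ℝ) : Prop where
  isAdmissible : ∀ n, (s n).IsAdmissible
  isSuccessor : ∀ n, (s (n + 1)).IsSuccessor (s n) c d n

lemma exists_isAdmissible : ∃ s : Stage, s.IsAdmissible :=
  ⟨⟨1, 0, 1, 1, 1, 1⟩, .one, one_pos, ⟨0, by simp⟩, one_pos,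
    1 / 2, by norm_num, separatesHalfTranslates_one⟩

lemma exists_isSequence {a c d : ℝ} (ha : 0 ≤ a) (ha₁ : a < 1) (hca : c < a) (hd : 0 ≤ d)
    (had : a < (1 - a) * d) : ∃ s, IsSequence s c d := by
  choose next hadm hsucc using fun (n : ℕ) (s : {s : Stage // s.IsAdmissible}) =>
    s.2.exists_isSuccessor ha ha₁ hca hd had n
  obtain ⟨s₀, hs₀⟩ := exists_isAdmissible
  let s : ℕ → {s : Stage // s.IsAdmissible} :=
    fun n => Nat.rec ⟨s₀, hs₀⟩ (fun n s => ⟨next n s, hadm n s⟩) n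
  exact ⟨fun n => (s n).1, fun n => (s n).2, fun n => hsucc n (s n)⟩

namespace IsAdmissible

variable {s : Stage} (hs : s.IsAdmissible)
include hs

lemma isTorusDiffeo_lift : IsTorusDiffeo s.lift :=
  hs.isTorusDiffeo.conjShift s.angle

lemma continuous_map : Continuous s.map :=
  hs.isTorusDiffeo_lift.equivariant.continuous_toTorusMap
    hs.isTorusDiffeo_lift.contDiff.continuous

lemma map_iterate_torusProj (i : ℕ) (p : ℝ × ℝ) :
    s.map^[i] (torusProj p) = torusProj (s.lift^[i] p) :=
  hs.isTorusDiffeo_lift.equivariant.toTorusMap_iterate i p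

lemma factor_torusProj (p : ℝ × ℝ) : s.factor (torusProj p) = ((s.chart⁻¹ p).1 : Torus1) := by
  rw [factor, hs.isTorusDiffeo.equivariant_inv.toTorusMap_torusProj]
  rfl

lemma continuous_factor : Continuous s.factor :=
  (hs.isTorusDiffeo.equivariant_inv.continuous_toTorusMap
    hs.isTorusDiffeo.contDiff_inv.continuous).fst

lemma measurePreserving_factor : MeasurePreserving s.factor volume volume :=
  measurePreserving_fst.comp hs.isTorusDiffeo.inv.measurePreserving

lemma factor_map (x : Torus2) : s.factor (s.map x) = s.factor x + (s.angle : Torus1) := by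
  obtain ⟨p, rfl⟩ := isOpenQuotientMap_torusProj.surjective x
  rw [map, hs.isTorusDiffeo_lift.equivariant.toTorusMap_torusProj, hs.factor_torusProj,
    hs.factor_torusProj, lift, inv_conjShift_apply, Prod.fst_add, AddCircle.coe_add]

end IsAdmissible

namespace IsSequence

variable {s : ℕ → Stage} {c d : ℝ} (hs : IsSequence s c d)
include hs

lemma tol_succ_le_half (n : ℕ) : (s (n + 1)).tol ≤ (s n).tol / 2 :=
  (hs.isSuccessor n).tol_le

lemma tendsto_tol : Tendsto (fun n => (s n).tol) atTop (𝓝 0) :=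
  tendsto_zero_of_le_half (fun n => (hs.isAdmissible n).tol_pos.le) hs.tol_succ_le_half

lemma drift_succ_le_half (n : ℕ) : (s (n + 2)).drift ≤ (s (n + 1)).drift / 2 :=
  (hs.isSuccessor (n + 1)).drift_le.trans (hs.isSuccessor n).tol_le_drift

lemma tendsto_drift : Tendsto (fun n => (s (n + 1)).drift) atTop (𝓝 0) :=
  tendsto_zero_of_le_half (fun n => (hs.isSuccessor n).drift_pos.le) hs.drift_succ_le_half

lemma exists_limit_lift :
    ∃ F, IsTorusDiffeo F ∧ TendstoUniformly (fun n => ⇑(s n).lift) F atTop :=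
  exists_isTorusDiffeo_tendstoUniformly (fun n => (hs.isAdmissible n).isTorusDiffeo_lift)
    (fun n => (hs.isSuccessor n).crClose) fun n => (hs.isSuccessor n).crClose_inv

lemma dist_map_iterate_le {F : Equiv.Perm (ℝ × ℝ)} (hF : IsTorusDiffeo F)
    (hlim : TendstoUniformly (fun n => ⇑(s n).lift) F atTop) (n i : ℕ) (x : Torus2) :
    dist ((s n).map^[i] x) ((toTorusMap F)^[i] x) ≤ i * (2 * (s (n + 1)).drift) := by
  obtain ⟨p, rfl⟩ := isOpenQuotientMap_torusProj.surjective x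
  rw [(hs.isAdmissible n).map_iterate_torusProj, hF.equivariant.toTorusMap_iterate]
  refine (dist_torusProj_le _ _).trans ?_
  rw [mul_left_comm]
  refine dist_le_of_dist_le_half_of_tendsto (u := fun n => (s n).lift^[i] p)
    (θ := fun n => (s (n + 1)).drift) hs.drift_succ_le_half i.cast_nonneg (fun n => ?_)
    (tendsto_iterate_of_tendstoUniformly hlim hF.contDiff.continuous i p) n
  rw [dist_comm]
  exact (hs.isSuccessor n).dist_iterate_le i p

lemma exists_tendsto_angle : ∃ α, Tendsto (fun n => (s n).angle) atTop (𝓝 α) ∧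
    ∀ n, (s n).angle < α ∧ α - (s n).angle ≤ 2 * (s n).tol := by
  have hmono : StrictMono fun n => (s n).angle :=
    strictMono_nat_of_lt_succ fun n => (hs.isSuccessor n).lt_angle
  have hdist : ∀ n, dist (s n).angle (s (n + 1)).angle ≤ 1 * (s n).tol := fun n => by
    rw [dist_comm, Real.dist_eq, abs_of_pos (sub_pos.2 (hmono n.lt_succ_self)), one_mul]
    exact (hs.isSuccessor n).angle_sub_le
  obtain ⟨α, hα⟩ := cauchySeq_tendsto_of_complete
    (cauchySeq_of_dist_le_half hs.tol_succ_le_half zero_le_one hdist)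
  have hlt : ∀ n, (s n).angle < α := fun n =>
    (hmono n.lt_succ_self).trans_le (hmono.monotone.ge_of_tendsto hα _)
  refine ⟨α, hα, fun n => ⟨hlt n, ?_⟩⟩
  have h := dist_le_of_dist_le_half_of_tendsto hs.tol_succ_le_half zero_le_one hdist hα n
  rwa [dist_comm, Real.dist_eq, abs_of_pos (sub_pos.2 (hlt n)), one_mul] at h

lemma exists_irrational_tendsto_angle :
    ∃ α, Irrational α ∧ Tendsto (fun n => (s n).angle) atTop (𝓝 α) := by
  obtain ⟨α, hα, hdist⟩ := hs.exists_tendsto_angle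
  choose b hb using fun n => (hs.isAdmissible (n + 1)).exists_den_mul_angle_eq
  have hden : ∀ n, (0 : ℝ) < (s (n + 1)).den := fun n =>
    mod_cast (hs.isAdmissible (n + 1)).den_pos
  have hpos : ∀ n, 0 < (s (n + 1)).den * α - b n := fun n => by
    rw [← hb, ← mul_sub]
    exact mul_pos (hden n) (sub_pos.2 (hdist _).1)
  have hle : ∀ n, (s (n + 1)).den * α - b n ≤ 2 * (1 / 2) ^ n := fun n => by
    rw [← hb, ← mul_sub, mul_comm]
    calc (α - (s (n + 1)).angle) * (s (n + 1)).den
        ≤ 2 * (s (n + 1)).tol * (s (n + 1)).den := by gcongr; exact (hdist _).2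
      _ ≤ 2 * (1 / 2) ^ n := by
        rw [mul_assoc]
        exact mul_le_mul_of_nonneg_left (hs.isSuccessor n).tol_mul_den_le zero_le_two
  exact ⟨α, irrational_of_tendsto_mul_sub (fun n => (sub_pos.1 (hpos n)).ne')
    (squeeze_zero (fun n => (hpos n).le) hle
      (mul_zero (2 : ℝ) ▸ tendsto_half_pow_nhds_zero.const_mul 2)), hα⟩

lemma dist_factor_succ_le (x : Torus2) (n : ℕ) :
    dist ((s n).factor x) ((s (n + 1)).factor x) ≤ 1 * (s n).tol := by
  obtain ⟨p, rfl⟩ := isOpenQuotientMap_torusProj.surjective x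
  rw [(hs.isAdmissible n).factor_torusProj, (hs.isAdmissible (n + 1)).factor_torusProj, dist_comm,
    one_mul]
  exact (dist_addCircle_coe_le _ _).trans ((hs.isSuccessor n).abs_fst_inv_sub_le p)

lemma dist_factor_le_of_tendsto {ψ : Torus2 → Torus1}
    (hψ : ∀ x, Tendsto (fun n => (s n).factor x) atTop (𝓝 (ψ x))) (n : ℕ) (x : Torus2) :
    dist ((s n).factor x) (ψ x) ≤ 2 * (s n).tol := by
  simpa only [one_mul] using dist_le_of_dist_le_half_of_tendsto hs.tol_succ_le_half zero_le_one
    (hs.dist_factor_succ_le x) (hψ x) n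

lemma exists_tendstoUniformly_factor :
    ∃ ψ, TendstoUniformly (fun n => (s n).factor) ψ atTop := by
  choose ψ hψ using fun x => cauchySeq_tendsto_of_complete
    (cauchySeq_of_dist_le_half hs.tol_succ_le_half zero_le_one (hs.dist_factor_succ_le x))
  refine ⟨ψ, Metric.tendstoUniformly_iff.2 fun ε hε => ?_⟩
  filter_upwards [(hs.tendsto_tol.const_mul 2).eventually (gt_mem_nhds (by rwa [mul_zero]))]
    with n hn x
  rw [dist_comm]
  exact (hs.dist_factor_le_of_tendsto hψ n x).trans_lt hn

section Factor

variable {ψ : Torus2 → Torus1} (hψ : TendstoUniformly (fun n => (s n).factor) ψ atTop)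
include hψ

lemma continuous_limit_factor : Continuous ψ :=
  hψ.continuous (Frequently.of_forall fun n => (hs.isAdmissible n).continuous_factor)

lemma measurePreserving_limit_factor : MeasurePreserving ψ volume volume :=
  measurePreserving_of_tendsto (fun n => (hs.isAdmissible n).measurePreserving_factor)
    (hs.continuous_limit_factor hψ).measurable hψ.tendsto_at

lemma limit_factor_toTorusMap {F : Equiv.Perm (ℝ × ℝ)} (hF : IsTorusDiffeo F)
    (hlim : TendstoUniformly (fun n => ⇑(s n).lift) F atTop) {α : ℝ}
    (hα : Tendsto (fun n => (s n).angle) atTop (𝓝 α)) (x : Torus2) :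
    ψ (toTorusMap F x) = ψ x + (α : Torus1) := by
  have hmap : Tendsto (fun n => (s n).map x) atTop (𝓝 (toTorusMap F x)) :=
    tendsto_toTorusMap (fun n => (hs.isAdmissible n).isTorusDiffeo_lift.equivariant)
      hF.equivariant hlim.tendsto_at x
  refine tendsto_nhds_unique
    (hψ.tendsto_comp (hs.continuous_limit_factor hψ).continuousAt hmap) ?_
  simp only [fun n => (hs.isAdmissible n).factor_map x]
  exact (hψ.tendsto_at x).add (((AddCircle.continuous_mk' 1).tendsto α).comp hα)

lemma exists_injOn_limit_factor :
    ∃ A : Set Torus2, MeasurableSet A ∧ volume Aᶜ = 0 ∧ InjOn ψ A := by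
  choose A hAm hA hdet using fun n => (hs.isSuccessor n).exists_fstDetermines
  have hsum : ∑' n, volume (A n)ᶜ ≠ ∞ := by
    refine ne_top_of_le_ne_top ?_ (ENNReal.tsum_le_tsum hA)
    rw [← ENNReal.ofReal_tsum_of_nonneg (fun n => by positivity) summable_geometric_two]
    exact ENNReal.ofReal_ne_top
  refine ⟨(limsup (fun n => (A n)ᶜ) atTop)ᶜ,
    (MeasurableSet.measurableSet_limsup fun n => (hAm n).compl).compl, ?_, fun x hx y hy hxy => ?_⟩
  · rw [compl_compl]
    exact measure_limsup_atTop_eq_zero hsum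
  · rw [mem_compl_iff, mem_limsup_iff_frequently_mem, not_frequently] at hx hy
    refine dist_le_zero.1 (ge_of_tendsto tendsto_half_pow_nhds_zero ?_)
    filter_upwards [hx, hy] with n hxn hyn
    have hdist := dist_triangle_right ((s (n + 1)).factor x) ((s (n + 1)).factor y) (ψ x)
    have hdist_le := hs.dist_factor_le_of_tendsto hψ.tendsto_at (n + 1)
    obtain ⟨p, rfl⟩ := isOpenQuotientMap_torusProj.surjective x
    obtain ⟨q, rfl⟩ := isOpenQuotientMap_torusProj.surjective y
    refine hdet n p q (not_not.1 hxn) (not_not.1 hyn) ?_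
    rw [← (hs.isAdmissible (n + 1)).factor_torusProj,
      ← (hs.isAdmissible (n + 1)).factor_torusProj]
    have hp := hdist_le (torusProj p)
    have hq := hdist_le (torusProj q)
    rw [← hxy] at hq
    linarith

end Factor

end IsSequence

end Stage

/-! ### Factor maps injective almost everywhere -/

section InjectiveFactor

variable {X Y : Type*} [MeasurableSpace X] [MeasurableSpace Y] {μ : Measure X} {ν : Measure Y}
  {T : X → X} {R : Y → Y} {ψ : X → Y} {A : Set X}

lemma exists_mapsTo_subset_of_measure_compl_eq_zero (hT : MeasurePreserving T μ μ)
    (hA : MeasurableSet A) (hA₀ : μ Aᶜ = 0) :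
    ∃ A' ⊆ A, MeasurableSet A' ∧ μ A'ᶜ = 0 ∧ MapsTo T A' A' := by
  refine ⟨⋂ i : ℕ, T^[i] ⁻¹' A, iInter_subset _ 0,
    .iInter fun i => (hT.iterate i).measurable hA, ?_, fun x hx => ?_⟩
  · rw [compl_iInter, measure_iUnion_null_iff]
    intro i
    rw [← preimage_compl, (hT.iterate i).measure_preimage hA.compl.nullMeasurableSet, hA₀]
  · rw [mem_iInter] at hx ⊢
    exact fun i => hx (i + 1)

variable [StandardBorelSpace X] [MeasurableSpace.CountablySeparated Y]

lemma exists_measurable_leftInvOn [Nonempty X] (hψ : Measurable ψ) (hA : MeasurableSet A)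
    (hinj : InjOn ψ A) : ∃ φ, Measurable φ ∧ LeftInvOn φ ψ A := by
  have := hA.standardBorel
  have hemb : MeasurableEmbedding (A.domRestrict ψ) :=
    (hψ.comp measurable_subtype_coe).measurableEmbedding (injOn_iff_injective.1 hinj)
  obtain ⟨φ, hφ, hcomp⟩ := hemb.exists_measurable_extend measurable_subtype_coe fun _ => ‹_›
  exact ⟨φ, hφ, fun x hx => congrFun hcomp ⟨x, hx⟩⟩

lemma ergodic_of_semiconj_of_injOn [IsFiniteMeasure ν] (hT : MeasurePreserving T μ μ)
    (hR : Ergodic R ν) (hψ : MeasurePreserving ψ μ ν) (hsemi : Function.Semiconj ψ T R)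
    (hA : MeasurableSet A) (hA₀ : μ Aᶜ = 0) (hinj : InjOn ψ A) : Ergodic T μ := by
  obtain ⟨A', hA'A, hA', hA'₀, hmaps⟩ := exists_mapsTo_subset_of_measure_compl_eq_zero hT hA hA₀
  have hinj' : InjOn ψ A' := hinj.mono hA'A
  refine ⟨hT, ⟨fun {t} ht hinv => ?_⟩⟩
  set B := ψ '' (A' ∩ t)
  have hB : MeasurableSet B :=
    (hA'.inter ht).image_of_measurable_injOn hψ.measurable (hinj'.mono inter_subset_left)
  have hBR : B ⊆ R ⁻¹' B := by
    rintro _ ⟨x, ⟨hx, hxt⟩, rfl⟩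
    exact ⟨T x, ⟨hmaps hx, hinv.symm.subset hxt⟩, hsemi x⟩
  have ht_ae : t =ᵐ[μ] ψ ⁻¹' B := by
    filter_upwards [compl_mem_ae_iff.2 hA'₀] with x hx
    rw [compl_compl] at hx
    refine propext ⟨fun hxt => ⟨x, ⟨hx, hxt⟩, rfl⟩, ?_⟩
    rintro ⟨y, ⟨hy, hyt⟩, hyx⟩
    rwa [← hinj' hy hx hyx]
  rw [eventuallyConst_set']
  refine (hR.ae_empty_or_univ_of_ae_le_preimage' hB.nullMeasurableSet
    (Eventually.of_forall hBR) (measure_ne_top _ _)).imp (fun h => ?_) fun h => ?_ <;>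
  exact ht_ae.trans (hψ.quasiMeasurePreserving.preimage_ae_eq h)

end InjectiveFactor

lemma ergodic_add_right_of_irrational {α : ℝ} (hα : Irrational α) :
    Ergodic (fun y : Torus1 => y + (α : Torus1)) volume := by
  rw [AddCircle.ergodic_add_right, addOrderOf_eq_zero_iff']
  intro n hn hnα
  rw [← AddCircle.coe_nsmul, nsmul_eq_mul, ← AddCircle.coe_zero] at hnα
  obtain ⟨a, ha⟩ := addCircle_coe_eq_iff.1 hnα.symm
  rw [zero_add] at ha
  exact Int.not_irrational a (ha ▸ hα.natCast_mul hn.ne')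

lemma isoToIrrationalRotation_of_injOn {T : Torus2 → Torus2} {ψ : Torus2 → Torus1} {α : ℝ}
    {A : Set Torus2} (hα : Irrational α) (hT : MeasurePreserving T volume volume)
    (hψ : MeasurePreserving ψ volume volume) (hsemi : ∀ x, ψ (T x) = ψ x + (α : Torus1))
    (hA : MeasurableSet A) (hA₀ : volume Aᶜ = 0) (hinj : InjOn ψ A) :
    IsoToIrrationalRotation T := by
  obtain ⟨A', hA'A, hA', hA'₀, hmaps⟩ := exists_mapsTo_subset_of_measure_compl_eq_zero hT hA hA₀
  have hinj' : InjOn ψ A' := hinj.mono hA'A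
  have hB : MeasurableSet (ψ '' A') := hA'.image_of_measurable_injOn hψ.measurable hinj'
  obtain ⟨φ, hφ, hleft⟩ := exists_measurable_leftInvOn hψ.measurable hA' hinj'
  refine ⟨α, hα, A', ψ '' A', ψ, φ, hA', hB, hA'₀, ?_, hmaps, ?_, hψ.measurable, hφ,
    mapsTo_image _ _, ?_, hleft, ?_, hψ.map_eq, fun x _ => hsemi x⟩
  · rw [← hψ.measure_preimage hB.compl.nullMeasurableSet]
    exact measure_mono_null (fun x hx hxA => hx (mem_image_of_mem ψ hxA)) hA'₀
  · rintro _ ⟨x, hx, rfl⟩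
    exact ⟨T x, hmaps hx, hsemi x⟩
  · rintro _ ⟨x, hx, rfl⟩
    rwa [hleft hx]
  · rintro _ ⟨x, hx, rfl⟩
    rw [hleft hx]

/-! ### Slow entropy of limits -/

lemma eventually_exists_lt_mul_and_mul_succ_le {u : ℕ → ℝ} (hu : ∀ n, 0 < u n)
    (hlim : Tendsto u atTop (𝓝 0)) {c : ℝ} (hc : 0 < c) (n₀ : ℕ) :
    ∀ᶠ m : ℕ in atTop, ∃ n ≥ n₀, c < m * u n ∧ m * u (n + 1) ≤ c := by
  filter_upwards [(tendsto_natCast_atTop_atTop.atTop_mul_const (hu n₀)).eventually_gt_atTop c]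
    with m hm
  have hsmall : ∀ᶠ n in atTop, m * u n < c :=
    (hlim.const_mul (m : ℝ)).eventually (gt_mem_nhds (by rwa [mul_zero]))
  obtain ⟨N, hN⟩ := (hsmall.and (eventually_ge_atTop n₀)).exists
  by_contra! hstep
  exact hN.1.not_gt (Nat.le_induction hm hstep N hN.2)

section Limit

variable {X : Type*} [PseudoMetricSpace X] [CompactSpace X] {S : ℕ → X → X} {T : X → X}
  {κ : ℕ → ℝ} {ε : ℝ}

lemma tendsto_bowenCoverNum_div_rpow_of_dist_iterate_le (hS : ∀ n, Continuous (S n))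
    (hclose : ∀ n i x, dist ((S n)^[i] x) (T^[i] x) ≤ i * κ n) (hκ : ∀ n, 0 < κ n)
    (hκ₀ : Tendsto κ atTop (𝓝 0)) (hε : 0 < ε) {U : ℕ → ℝ}
    (hU : ∀ n m, bowenCoverNum (S n) m (ε / 2) ≤ U n) {d : ℝ} (hd : 0 < d)
    (hUκ : Tendsto (fun n => U (n + 1) * κ n ^ d) atTop (𝓝 0)) :
    Tendsto (fun m : ℕ => bowenCoverNum T m ε / (m : ℝ) ^ d) atTop (𝓝 0) := by
  refine tendsto_order.2 ⟨fun η hη => Eventually.of_forall fun m => hη.trans_le (by positivity),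
    fun η hη => ?_⟩
  have hη' : 0 < η * (ε / 4) ^ d := by positivity
  obtain ⟨n₀, hn₀⟩ := eventually_atTop.1 (hUκ.eventually_lt_const hη')
  filter_upwards [eventually_exists_lt_mul_and_mul_succ_le hκ hκ₀ (by positivity : 0 < ε / 4) n₀,
    eventually_gt_atTop 0] with m ⟨n, hn, hlt, hle⟩ hm
  have hm' : (0 : ℝ) < m := Nat.cast_pos.2 hm
  have hcount : bowenCoverNum T m ε ≤ bowenCoverNum (S (n + 1)) m (ε / 2) := by
    have h := bowenCoverNum_add_le (n := m) (T' := T) (hS (n + 1)) (half_pos hε)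
      (by positivity : 0 ≤ ε / 4) fun i hi x => (hclose (n + 1) i x).trans
        (le_trans (by have := (hκ (n + 1)).le; gcongr) hle)
    rwa [show ε / 2 + 2 * (ε / 4) = ε by ring] at h
  rw [div_lt_iff₀ (Real.rpow_pos_of_pos hm' d)]
  refine lt_of_mul_lt_mul_right ?_ (Real.rpow_nonneg (hκ n).le d)
  calc (bowenCoverNum T m ε : ℝ) * κ n ^ d
      ≤ U (n + 1) * κ n ^ d := by
        have := (hκ n).le
        gcongr
        exact (Nat.cast_le.2 hcount).trans (hU (n + 1) m)
    _ < η * (ε / 4) ^ d := hn₀ n hn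
    _ ≤ η * (m * κ n) ^ d := by gcongr
    _ = η * (m : ℝ) ^ d * κ n ^ d := by rw [Real.mul_rpow hm'.le (hκ n).le, mul_assoc]

lemma frequently_rpow_le_bowenCoverNum_of_dist_iterate_le (hT : Continuous T)
    (hclose : ∀ n i x, dist ((S n)^[i] x) (T^[i] x) ≤ i * κ n) (hκ : ∀ n, 0 ≤ κ n)
    (hε : 0 < ε) {δ c : ℝ} {m : ℕ → ℕ} (hm : Tendsto m atTop atTop)
    (hmκ : ∀ᶠ n in atTop, m n * κ n ≤ δ)
    (hc : ∀ n, (m n : ℝ) ^ c ≤ bowenCoverNum (S n) (m n) (ε + 2 * δ)) :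
    ∃ᶠ k : ℕ in atTop, (k : ℝ) ^ c ≤ bowenCoverNum T k ε := by
  refine hm.frequently (hmκ.mono fun n hn => (hc n).trans ?_).frequently
  have hδ : 0 ≤ δ := (mul_nonneg (m n).cast_nonneg (hκ n)).trans hn
  refine Nat.cast_le.2 (bowenCoverNum_add_le hT hε hδ fun i hi x => ?_)
  rw [dist_comm]
  exact (hclose n i x).trans (le_trans (by have := hκ n; gcongr) hn)

end Limit

namespace Stage.IsSequence

variable {s : ℕ → Stage} {c d : ℝ} (hs : IsSequence s c d) {F : Equiv.Perm (ℝ × ℝ)}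
  (hF : IsTorusDiffeo F) (hlim : TendstoUniformly (fun n => ⇑(s n).lift) F atTop)
include hs hF hlim

lemma mem_upperBounds_slowEntropyExponents (hd : 0 < d) {ε : ℝ} (hε : 0 < ε) (hε₁ : ε ≤ 1) :
    d ∈ upperBounds (slowEntropyExponents (toTorusMap F) polScale ε) := by
  refine fun t ht => le_of_mem_slowEntropyExponents_polScale ?_ ht
  have hcount := fun n => (hs.isSuccessor n).bowenCoverNum_le _ (half_pos hε) (by linarith)
  have hdrift_nonneg : ∀ n, 0 ≤ (s (n + 2)).drift := fun n => (hs.isSuccessor (n + 1)).drift_pos.le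
  refine tendsto_bowenCoverNum_div_rpow_of_dist_iterate_le (S := fun n => (s (n + 1)).map)
    (κ := fun n => 2 * (s (n + 2)).drift) (U := fun n => (s (n + 1)).cover / (ε / 2) ^ 2)
    (fun n => (hs.isAdmissible (n + 1)).continuous_map)
    (fun n => hs.dist_map_iterate_le hF hlim (n + 1))
    (fun n => mul_pos two_pos (hs.isSuccessor (n + 1)).drift_pos) ?_ hε
    hcount hd ?_
  · have h := (hs.tendsto_drift.comp (tendsto_add_atTop_nat 1)).const_mul 2
    rwa [mul_zero] at h
  · refine squeeze_zero (g := fun n => 2 ^ d / (ε / 2) ^ 2 * (1 / 2) ^ (n + 1)) (fun n => ?_)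
      (fun n => ?_) ?_
    · exact mul_nonneg ((Nat.cast_nonneg _).trans (hcount (n + 1) 0))
        (Real.rpow_nonneg (mul_nonneg zero_le_two (hdrift_nonneg n)) d)
    · have h := (hs.isSuccessor (n + 1)).cover_mul_rpow_le
      rw [Real.mul_rpow zero_le_two (hdrift_nonneg n)]
      calc (s (n + 2)).cover / (ε / 2) ^ 2 * (2 ^ d * (s (n + 2)).drift ^ d)
        _ = 2 ^ d / (ε / 2) ^ 2 * ((s (n + 2)).cover * (s (n + 2)).drift ^ d) := by ring
        _ ≤ 2 ^ d / (ε / 2) ^ 2 * (1 / 2) ^ (n + 1) := by gcongr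
    · have h := (tendsto_half_pow_nhds_zero.comp (tendsto_add_atTop_nat 1)).const_mul
        (2 ^ d / (ε / 2) ^ 2)
      rwa [mul_zero] at h

lemma mem_slowEntropyExponents (hc : 0 < c) {ε : ℝ} (hε : 0 < ε) (hε₁ : ε ≤ 1 / 16) :
    c ∈ slowEntropyExponents (toTorusMap F) polScale ε := by
  have hT := hF.equivariant.continuous_toTorusMap hF.contDiff.continuous
  refine slowEntropyExponents_anti hT hε hε₁ (mem_slowEntropyExponents_polScale hc ?_)
  refine frequently_rpow_le_bowenCoverNum_of_dist_iterate_le (S := fun n => (s (n + 1)).map)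
    (κ := fun n => 2 * (s (n + 2)).drift) (m := fun n => (s (n + 1)).den) (δ := 1 / 32) hT
    (fun n => hs.dist_map_iterate_le hF hlim (n + 1))
    (fun n => mul_nonneg zero_le_two (hs.isSuccessor (n + 1)).drift_pos.le) (by norm_num)
    (tendsto_atTop_mono (fun n => (hs.isSuccessor n).le_den) tendsto_id) ?_ fun n => ?_
  · have h := tendsto_half_pow_nhds_zero.const_mul 2
    rw [mul_zero] at h
    filter_upwards [h.eventually_le_const (by norm_num : (0 : ℝ) < 1 / 32)] with n hn
    refine le_trans ?_ hn
    have := (hs.isSuccessor n).tol_mul_den_le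
    have := (hs.isSuccessor (n + 1)).drift_le
    calc ((s (n + 1)).den : ℝ) * (2 * (s (n + 2)).drift)
        ≤ (s (n + 1)).den * (2 * (s (n + 1)).tol) := by gcongr
      _ = 2 * ((s (n + 1)).tol * (s (n + 1)).den) := by ring
      _ ≤ 2 * (1 / 2) ^ n := by gcongr
  · norm_num1
    exact (hs.isSuccessor n).rpow_le_bowenCoverNum

end Stage.IsSequence

/-! ### Main results -/

theorem stmt6_general {c d : ℝ} (hc : 0 < c) (hd : 0 < d) (hcd : c < d / (1 + d)) :
    ∃ T : Torus2 → Torus2, IsCkTorusDiffeo ⊤ T ∧ MeasurePreserving T volume volume ∧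
      Ergodic T volume ∧ IsoToIrrationalRotation T ∧
      ∃ E, Tendsto (topSlowEntFun T polScale) (𝓝[>] 0) (𝓝 E) ∧ c ≤ E ∧ E ≤ d := by
  obtain ⟨a, hca, had⟩ := exists_between hcd
  rw [lt_div_iff₀ (by positivity)] at had
  have ha : 0 < a := hc.trans hca
  have ha₁ : a < 1 := by nlinarith
  obtain ⟨s, hs⟩ := Stage.exists_isSequence ha.le ha₁ hca hd.le (by linarith)
  obtain ⟨F, hF, hlim⟩ := hs.exists_limit_lift
  obtain ⟨α, hα, hangle⟩ := hs.exists_irrational_tendsto_angle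
  obtain ⟨ψ, hψ⟩ := hs.exists_tendstoUniformly_factor
  obtain ⟨A, hA, hA₀, hinj⟩ := hs.exists_injOn_limit_factor hψ
  have hT : MeasurePreserving (toTorusMap F) volume volume := hF.measurePreserving
  have hψ_mp := hs.measurePreserving_limit_factor hψ
  have hsemi := hs.limit_factor_toTorusMap hψ hF hlim hangle
  refine ⟨toTorusMap F, hF.isCkTorusDiffeo, hT,
    ergodic_of_semiconj_of_injOn hT (ergodic_add_right_of_irrational hα) hψ_mp hsemi hA hA₀ hinj,
    isoToIrrationalRotation_of_injOn hα hT hψ_mp hsemi hA hA₀ hinj,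
    exists_tendsto_topSlowEntFun (hF.equivariant.continuous_toTorusMap hF.contDiff.continuous)
      ?_ ?_⟩
  · filter_upwards [Ioc_mem_nhdsGT (by norm_num : (0 : ℝ) < 1 / 16)] with ε hε
    exact hs.mem_slowEntropyExponents hF hlim hc hε.1 hε.2
  · filter_upwards [Ioc_mem_nhdsGT one_pos] with ε hε
    exact hs.mem_upperBounds_slowEntropyExponents hF hlim hd hε.1 hε.2

lemma IsCkTorusDiffeo.mono {k l : ℕ∞} {T : Torus2 → Torus2} (hT : IsCkTorusDiffeo l T)
    (h : k ≤ l) : IsCkTorusDiffeo k T := by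
  obtain ⟨hbij, ⟨F, hF, hFT⟩, G, hG, hGT⟩ := hT
  have h' : (k : WithTop ℕ∞) ≤ l := WithTop.coe_le_coe.2 h
  exact ⟨hbij, ⟨F, hF.of_le h', hFT⟩, G, hG.of_le h', hGT⟩

lemma one_div_lt_one_div_sub_two_div {x : ℝ} (hx : 2 < x) :
    1 / x < 1 / (x - 2) / (1 + 1 / (x - 2)) := by
  have hx₂ : 0 < x - 2 := sub_pos.2 hx
  rw [div_div, mul_add, mul_one, mul_one_div_cancel hx₂.ne']
  exact one_div_lt_one_div_of_lt (by linarith) (by linarith)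

/-- For every integer `K > 1` there exists an ergodic `C^{K-1}`
volume-preserving diffeomorphism `T` of `𝕋²`, measure-theoretically isomorphic to an
irrational circle rotation, whose upper topological slow entropy `E` w.r.t. the
polynomial scale `a^{pol}_m(t) = m^t` satisfies `1/K⁴ ≤ E < 1/(K⁴ - K - 2)`. -/
theorem stmt6 (K : ℕ) (hK : 1 < K) :
    ∃ T : Torus2 → Torus2,
      IsCkTorusDiffeo ((K - 1 : ℕ) : ℕ∞) T ∧
      MeasurePreserving T (volume : Measure Torus2) volume ∧
      Ergodic T (volume : Measure Torus2) ∧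
      IsoToIrrationalRotation T ∧
      ∃ E : ℝ,
        Filter.Tendsto (topSlowEntFun T polScale) (𝓝[>] (0 : ℝ)) (𝓝 E) ∧
        1 / (K : ℝ) ^ 4 ≤ E ∧ E < 1 / ((K : ℝ) ^ 4 - (K : ℝ) - 2) := by
  have hK₂ : (2 : ℝ) ≤ K := mod_cast hK
  have hpow : (2 : ℝ) ^ 3 ≤ (K : ℝ) ^ 3 := by gcongr
  have hK_lt : (K : ℝ) + 2 < (K : ℝ) ^ 4 := by nlinarith
  obtain ⟨T, hT, hvol, herg, hiso, E, hE, hle, hge⟩ := stmt6_general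
    (c := 1 / (K : ℝ) ^ 4) (d := 1 / ((K : ℝ) ^ 4 - 2)) (by positivity)
    (one_div_pos.2 (by linarith)) (one_div_lt_one_div_sub_two_div (by linarith))
  exact ⟨T, hT.mono le_top, hvol, herg, hiso, E, hE, hle,
    hge.trans_lt (one_div_lt_one_div_of_lt (by linarith) (by linarith))⟩
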